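/- Let q = p^f be a power of a prime p, let 2m ≥ 4 and suppose GSp_{2m}(q) is not solvable. Let π be a set of primes with 2 ∈ π, 3 ∉ π and p ∉ π, and let H be a solvable Hall π-subgroup of GSp_{2m}(q). Set G = H·Sp_{2m}(q). Then there exist x, y, z ∈ G such that H ∩ H^x ∩ H^y ∩ H^z is contained in the center Z(GSp_{2m}(q)), i.e. consists of scalar matrices. -/

import Mathlib

open Matrix Pointwise

/-- `H^x = x⁻¹ H x`. -/
def conjBy {G : Type*} [Group G] (H : Subgroup G) (x : G) : Subgroup G :=
  Subgroup.map ((MulAut.conj x⁻¹).toMonoidHom) H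

/-- Hall π-subgroup of the whole group. -/
def IsHallSubgroup {G : Type*} [Group G] (π : Set ℕ) (H : Subgroup G) : Prop :=
  (∀ r : ℕ, r.Prime → r ∣ Nat.card H → r ∈ π) ∧ ∀ r ∈ π, ¬ r ∣ H.index

/-- Hall π-subgroup of the subgroup `K`. -/
def IsHallSubgroupIn {G : Type*} [Group G] (π : Set ℕ) (K H : Subgroup G) : Prop :=
  H ≤ K ∧ (∀ r : ℕ, r.Prime → r ∣ Nat.card H → r ∈ π) ∧ ∀ r ∈ π, ¬ r ∣ H.relIndex K

/-- The subgroup `SL_n` of `GL_n`. -/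
def SLsub (n : ℕ) (F : Type*) [Field F] : Subgroup (GL (Fin n) F) where
  carrier := {g | Matrix.det (g : Matrix (Fin n) (Fin n) F) = 1}
  one_mem' := by simp
  mul_mem' := by
    intro a b ha hb
    simp only [Set.mem_setOf_eq, Units.val_mul, Matrix.det_mul] at *
    rw [ha, hb, one_mul]
  inv_mem' := by
    intro g hg
    simp only [Set.mem_setOf_eq] at *
    have h1 : ((g⁻¹ : GL (Fin n) F) : Matrix (Fin n) (Fin n) F) *
        (g : Matrix (Fin n) (Fin n) F) = 1 := g.inv_mul
    have := congrArg Matrix.det h1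
    rw [Matrix.det_mul, Matrix.det_one, hg, mul_one] at this
    exact this

/-- The group of similitudes of the bilinear form `B` (acting on row vectors). -/
def similitudeGroup {n : ℕ} {F : Type*} [Field F]
    (B : (Fin n → F) → (Fin n → F) → F) : Subgroup (GL (Fin n) F) where
  carrier := {g | ∃ c : Fˣ, ∀ u v : Fin n → F,
    B (Matrix.vecMul u (g : Matrix (Fin n) (Fin n) F))
      (Matrix.vecMul v (g : Matrix (Fin n) (Fin n) F)) = (c : F) * B u v}
  one_mem' := ⟨1, by simp⟩
  mul_mem' := by
    rintro a b ⟨c, hc⟩ ⟨d, hd⟩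
    refine ⟨c * d, fun u v => ?_⟩
    simp only [Units.val_mul, ← Matrix.vecMul_vecMul, hd, hc]
    ring
  inv_mem' := by
    rintro g ⟨c, hc⟩
    refine ⟨c⁻¹, fun u v => ?_⟩
    have h1 : ∀ w : Fin n → F, Matrix.vecMul
        (Matrix.vecMul w ((g⁻¹ : GL (Fin n) F) : Matrix (Fin n) (Fin n) F))
        (g : Matrix (Fin n) (Fin n) F) = w := by
      intro w
      rw [Matrix.vecMul_vecMul, g.inv_mul, Matrix.vecMul_one]
    have h2 := hc (Matrix.vecMul u ((g⁻¹ : GL (Fin n) F) : Matrix (Fin n) (Fin n) F))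
      (Matrix.vecMul v ((g⁻¹ : GL (Fin n) F) : Matrix (Fin n) (Fin n) F))
    rw [h1, h1] at h2
    rw [h2, Units.val_inv_eq_inv_val, inv_mul_cancel_left₀ (by exact_mod_cast c.ne_zero)]

/-- The isometry group of the bilinear form `B` (acting on row vectors). -/
def isometryGroup {n : ℕ} {F : Type*} [Field F]
    (B : (Fin n → F) → (Fin n → F) → F) : Subgroup (GL (Fin n) F) where
  carrier := {g | ∀ u v : Fin n → F,
    B (Matrix.vecMul u (g : Matrix (Fin n) (Fin n) F))
      (Matrix.vecMul v (g : Matrix (Fin n) (Fin n) F)) = B u v}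
  one_mem' := by simp
  mul_mem' := by
    intro a b ha hb u v
    simp only [Set.mem_setOf_eq] at ha hb
    simp only [Units.val_mul, ← Matrix.vecMul_vecMul]
    rw [hb, ha]
  inv_mem' := by
    intro g hg u v
    have h1 : ∀ w : Fin n → F, Matrix.vecMul
        (Matrix.vecMul w ((g⁻¹ : GL (Fin n) F) : Matrix (Fin n) (Fin n) F))
        (g : Matrix (Fin n) (Fin n) F) = w := by
      intro w
      rw [Matrix.vecMul_vecMul, g.inv_mul, Matrix.vecMul_one]
    have h2 := hg (Matrix.vecMul u ((g⁻¹ : GL (Fin n) F) : Matrix (Fin n) (Fin n) F))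
      (Matrix.vecMul v ((g⁻¹ : GL (Fin n) F) : Matrix (Fin n) (Fin n) F))
    rw [h1, h1] at h2
    exact h2.symm

/-- The group of similitudes of the quadratic form `Q` (acting on row vectors). -/
def qSimilitudeGroup {n : ℕ} {F : Type*} [Field F]
    (Q : (Fin n → F) → F) : Subgroup (GL (Fin n) F) where
  carrier := {g | ∃ c : Fˣ, ∀ v : Fin n → F,
    Q (Matrix.vecMul v (g : Matrix (Fin n) (Fin n) F)) = (c : F) * Q v}
  one_mem' := ⟨1, by simp⟩
  mul_mem' := by
    rintro a b ⟨c, hc⟩ ⟨d, hd⟩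
    refine ⟨c * d, fun v => ?_⟩
    simp only [Units.val_mul, ← Matrix.vecMul_vecMul, hd, hc]
    ring
  inv_mem' := by
    rintro g ⟨c, hc⟩
    refine ⟨c⁻¹, fun v => ?_⟩
    have h1 : ∀ w : Fin n → F, Matrix.vecMul
        (Matrix.vecMul w ((g⁻¹ : GL (Fin n) F) : Matrix (Fin n) (Fin n) F))
        (g : Matrix (Fin n) (Fin n) F) = w := by
      intro w
      rw [Matrix.vecMul_vecMul, g.inv_mul, Matrix.vecMul_one]
    have h2 := hc (Matrix.vecMul v ((g⁻¹ : GL (Fin n) F) : Matrix (Fin n) (Fin n) F))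
    rw [h1] at h2
    rw [h2, Units.val_inv_eq_inv_val, inv_mul_cancel_left₀ (by exact_mod_cast c.ne_zero)]

/-- The unitary group `GU_n` with respect to the field automorphism `φ`. -/
def GUgrp (n : ℕ) {K : Type*} [Field K] (φ : K →+* K) : Subgroup (GL (Fin n) K) where
  carrier := {g | ((g : Matrix (Fin n) (Fin n) K).map φ)ᵀ * (g : Matrix (Fin n) (Fin n) K) = 1}
  one_mem' := by
    simp [Matrix.map_one φ φ.map_zero φ.map_one]
  mul_mem' := by
    intro a b ha hb
    simp only [Set.mem_setOf_eq, Units.val_mul, Matrix.map_mul, Matrix.transpose_mul] at *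
    calc ((b : Matrix (Fin n) (Fin n) K).map φ)ᵀ * ((a : Matrix (Fin n) (Fin n) K).map φ)ᵀ *
          ((a : Matrix (Fin n) (Fin n) K) * (b : Matrix (Fin n) (Fin n) K))
        = ((b : Matrix (Fin n) (Fin n) K).map φ)ᵀ *
          (((a : Matrix (Fin n) (Fin n) K).map φ)ᵀ * (a : Matrix (Fin n) (Fin n) K)) *
          (b : Matrix (Fin n) (Fin n) K) := by noncomm_ring
      _ = 1 := by rw [ha, mul_one, hb]
  inv_mem' := by
    intro g hg
    simp only [Set.mem_setOf_eq] at *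
    have hcomm : (g : Matrix (Fin n) (Fin n) K) * ((g : Matrix (Fin n) (Fin n) K).map φ)ᵀ = 1 :=
      mul_eq_one_comm.mp hg
    have h1 : ((g : Matrix (Fin n) (Fin n) K) * ((g⁻¹ : GL (Fin n) K) : Matrix (Fin n) (Fin n) K)).map φ = 1 := by
      rw [g.mul_inv]
      exact Matrix.map_one φ φ.map_zero φ.map_one
    rw [Matrix.map_mul] at h1
    have h2 := congrArg Matrix.transpose h1
    rw [Matrix.transpose_mul, Matrix.transpose_one] at h2
    calc (((g⁻¹ : GL (Fin n) K) : Matrix (Fin n) (Fin n) K).map φ)ᵀ *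
          ((g⁻¹ : GL (Fin n) K) : Matrix (Fin n) (Fin n) K)
        = (((g⁻¹ : GL (Fin n) K) : Matrix (Fin n) (Fin n) K).map φ)ᵀ *
          (((g : Matrix (Fin n) (Fin n) K).map φ)ᵀ * (g : Matrix (Fin n) (Fin n) K)) *
          ((g⁻¹ : GL (Fin n) K) : Matrix (Fin n) (Fin n) K) := by rw [hg, mul_one]
      _ = ((((g⁻¹ : GL (Fin n) K) : Matrix (Fin n) (Fin n) K).map φ)ᵀ *
          ((g : Matrix (Fin n) (Fin n) K).map φ)ᵀ) *
          ((g : Matrix (Fin n) (Fin n) K) * ((g⁻¹ : GL (Fin n) K) : Matrix (Fin n) (Fin n) K)) := by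
            noncomm_ring
      _ = 1 := by rw [h2, g.mul_inv, mul_one]

/-!
The space is an orthogonal sum of hyperbolic planes, and the root subgroups `SL₂(F)` of these planes
contain quaternion groups `⟨i, j⟩`, because `-1` is a sum of two squares in `F`. Together they
generate a `2`-group, so after a conjugation `H`, which has odd index, contains all of them.

The central involutions `t = i ^ 2`, `t'` of two quaternion planes in `H` commute. Otherwise, in the
solvable group generated by both quaternion groups, every abelian normal subgroup is central and
the centre has at most two elements, so that a minimal noncentral normal subgroup is extraspecial;
it leads to two elements satisfying the braid relation `u v u = v u v`, whose product has order
divisible by `3`. Since `t` determines its plane, each element of `H` permutes the planes.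

Choose lines in the planes, spanned by `ℓ₀, …, ℓₖ`, and join them along a path. The map
`u ↦ u + ∑ B(ℓₙ, u) ℓᵣ`, the sum running over the pairs of neighbours `n, r`, is an isometry whose
nilpotent part must commute with each element of `H` that stays in `H` after conjugation by it. Such
an element permutes the lines compatibly with the path; three choices of the lines in every plane
leave only scalars.
-/

namespace SymplecticHall

section Isometries

variable {F V : Type*} [Field F] [AddCommGroup V] [Module F V]

/-- The group of isometries of a bilinear form, as a group of linear automorphisms. -/
def formIsometries (B : LinearMap.BilinForm F V) : Subgroup (V ≃ₗ[F] V) where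
  carrier := {g | ∀ x y, B (g x) (g y) = B x y}
  one_mem' _ _ := rfl
  mul_mem' hg hh x y := (hg _ _).trans (hh x y)
  inv_mem' {g} hg x y := by simpa using (hg (g⁻¹ x) (g⁻¹ y)).symm

/-- The group of similitudes of a bilinear form: the linear automorphisms which multiply the form
by a nonzero constant. -/
def formSimilitudes (B : LinearMap.BilinForm F V) : Subgroup (V ≃ₗ[F] V) where
  carrier := {g | ∃ c : F, c ≠ 0 ∧ ∀ x y, B (g x) (g y) = c * B x y}
  one_mem' := ⟨1, one_ne_zero, fun x y => (one_mul (B x y)).symm⟩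
  mul_mem' := by
    rintro g h ⟨c, hc, hg⟩ ⟨d, hd, hh⟩
    exact ⟨c * d, mul_ne_zero hc hd, fun x y => by
      rw [LinearEquiv.mul_apply, LinearEquiv.mul_apply, hg, hh, mul_assoc]⟩
  inv_mem' := by
    rintro g ⟨c, hc, hg⟩
    exact ⟨c⁻¹, inv_ne_zero hc, fun x y => by
      rw [eq_inv_mul_iff_mul_eq₀ hc, ← hg]; simp⟩

variable {B : LinearMap.BilinForm F V} {g u : V ≃ₗ[F] V}

theorem formIsometries_le_formSimilitudes : formIsometries B ≤ formSimilitudes B :=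
  fun _ hg => ⟨1, one_ne_zero, fun x y => by rw [hg, one_mul]⟩

theorem conj_mem_formIsometries (hg : g ∈ formSimilitudes B) (hu : u ∈ formIsometries B) :
    g * u * g⁻¹ ∈ formIsometries B := by
  obtain ⟨c, -, h⟩ := hg
  intro x y
  simp only [LinearEquiv.mul_apply]
  rw [h, hu, ← h]
  simp

end Isometries

section Involution

variable {F V : Type*} [Field F] [AddCommGroup V] [Module F V] {t g : V ≃ₗ[F] V}

theorem exists_add_of_involution [NeZero (2 : F)] (ht : t * t = 1) (x : V) :
    ∃ y c, x = y + c ∧ t y = -y ∧ t c = c := by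
  have htt : t (t x) = x := LinearEquiv.congr_fun ht x
  have h2 : (2 : F) ≠ 0 := two_ne_zero
  refine ⟨(2⁻¹ : F) • (x - t x), (2⁻¹ : F) • (x + t x), ?_, ?_, ?_⟩
  · match_scalars <;> field_simp <;> norm_num
  · rw [map_smul, map_sub, htt]; module
  · rw [map_smul, map_add, htt]; module

theorem eq_zero_of_eq_neg_self [NeZero (2 : F)] {x : V} (hx : x = -x) : x = 0 := by
  have h : (2 : F) • x = 0 := by linear_combination (norm := module) hx
  exact (smul_eq_zero.mp h).resolve_left two_ne_zero

theorem apply_comm_of_commute (hg : Commute g t) (x : V) : g (t x) = t (g x) :=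
  LinearEquiv.congr_fun hg.eq x

theorem apply_eq_neg_of_commute (hg : Commute g t) {x : V} (hx : t x = -x) : t (g x) = -g x := by
  rw [← apply_comm_of_commute hg, hx, map_neg]

theorem apply_eq_self_of_commute (hg : Commute g t) {x : V} (hx : t x = x) : t (g x) = g x := by
  rw [← apply_comm_of_commute hg, hx]

/-- If `r` has order prime to the characteristic, then `r - 1` has no nontrivial Jordan block. -/
theorem apply_eq_self_of_apply_sub_eq {r : V ≃ₗ[F] V} (hr : (orderOf r : F) ≠ 0) {x : V}
    (hx : r (r x - x) = r x - x) : r x = x := by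
  have key (n : ℕ) : (r ^ n) x = x + (n : F) • (r x - x) := by
    induction n with
    | zero => simp
    | succ n ih =>
      rw [pow_succ', LinearEquiv.mul_apply, ih, map_add, map_smul, hx]
      push_cast
      module
  have h : x = x + (orderOf r : F) • (r x - x) := by
    rw [← key, pow_orderOf_eq_one]; rfl
  exact sub_eq_zero.mp ((smul_eq_zero.mp (left_eq_add.mp h)).resolve_left hr)

end Involution

/-- A hyperbolic pair `(w, v)` of an alternating form: two vectors which are not orthogonal. -/
structure HyperbolicPair {F V : Type*} [Field F] [AddCommGroup V] [Module F V]
    (B : LinearMap.BilinForm F V) where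
  isAlt : B.IsAlt
  w : V
  v : V
  form_ne_zero : B w v ≠ 0

namespace HyperbolicPair

variable {F V : Type*} [Field F] [AddCommGroup V] [Module F V] {B : LinearMap.BilinForm F V}
  (P : HyperbolicPair B)

theorem form_v_w : B P.v P.w = -B P.w P.v := (P.isAlt.neg_eq _ _).symm

/-- The linear combinations of the two vectors of a hyperbolic pair. -/
noncomputable def embed : (Fin 2 → F) →ₗ[F] V := Fintype.linearCombination F ![P.w, P.v]

theorem embed_apply (c : Fin 2 → F) : P.embed c = c 0 • P.w + c 1 • P.v := by
  simp [embed, Fintype.linearCombination_apply, Fin.sum_univ_two]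

/-- The coordinates of the orthogonal projection to the plane of a hyperbolic pair. -/
noncomputable def coord : V →ₗ[F] (Fin 2 → F) :=
  (B P.w P.v)⁻¹ • LinearMap.pi ![-B P.v, B P.w]

theorem coord_apply (x : V) :
    P.coord x = ![-(B P.v x) / B P.w P.v, B P.w x / B P.w P.v] := by
  ext r
  fin_cases r <;> simp [coord, div_eq_inv_mul]

@[simp]
theorem coord_embed (c : Fin 2 → F) : P.coord (P.embed c) = c := by
  have h := P.form_ne_zero
  ext r
  fin_cases r <;>
    simp [coord_apply, embed_apply, P.form_v_w, P.isAlt.self_eq_zero, h]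

theorem embed_injective : Function.Injective P.embed :=
  Function.LeftInverse.injective P.coord_embed

theorem coord_eq_zero_iff {x : V} : P.coord x = 0 ↔ B P.w x = 0 ∧ B P.v x = 0 := by
  simp [coord_apply, P.form_ne_zero, and_comm]

theorem form_embed_embed (c d : Fin 2 → F) :
    B (P.embed c) (P.embed d) = (c 0 * d 1 - c 1 * d 0) * B P.w P.v := by
  simp only [embed_apply, map_add, map_smul, LinearMap.add_apply, LinearMap.smul_apply,
    smul_eq_mul, P.isAlt.self_eq_zero, P.form_v_w]
  ring

theorem exists_eq_embed_add (x : V) : ∃ c y, x = P.embed c + y ∧ P.coord y = 0 :=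
  ⟨P.coord x, x - P.embed (P.coord x), by abel, by simp⟩

theorem form_embed_eq_zero {x : V} (hx : P.coord x = 0) (c : Fin 2 → F) : B (P.embed c) x = 0 := by
  rw [coord_eq_zero_iff] at hx
  simp [embed_apply, hx.1, hx.2]

/-- The action of `2 × 2` matrices on the plane of a hyperbolic pair, extended by the identity on
the orthogonal complement. -/
noncomputable def matrixAction : Matrix (Fin 2) (Fin 2) F →* Module.End F V where
  toFun M := 1 + P.embed ∘ₗ (M - 1).mulVecLin ∘ₗ P.coord
  map_one' := by simp
  map_mul' M N := by
    have h : M * N - 1 = (M - 1) + (N - 1) + (M - 1) * (N - 1) := by noncomm_ring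
    ext x
    simp only [h, LinearMap.add_apply, Module.End.one_apply, Module.End.mul_apply,
      LinearMap.comp_apply, Matrix.mulVecLin_apply, map_add, coord_embed,
      Matrix.mulVec_mulVec]
    abel

/-- The action of `SL₂` on the plane of a hyperbolic pair, extended by the identity on the
orthogonal complement. -/
noncomputable def slAction : Matrix.SpecialLinearGroup (Fin 2) F →* (V ≃ₗ[F] V) :=
  (LinearMap.GeneralLinearGroup.generalLinearEquiv F V).toMonoidHom.comp
    ((Units.map P.matrixAction).comp Matrix.SpecialLinearGroup.toGL)

theorem slAction_apply (M : Matrix.SpecialLinearGroup (Fin 2) F) (x : V) :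
    P.slAction M x = x + P.embed (((M : Matrix (Fin 2) (Fin 2) F) - 1) *ᵥ P.coord x) := rfl

theorem slAction_embed (M : Matrix.SpecialLinearGroup (Fin 2) F) (c : Fin 2 → F) :
    P.slAction M (P.embed c) = P.embed ((M : Matrix (Fin 2) (Fin 2) F) *ᵥ c) := by
  rw [slAction_apply, coord_embed, ← map_add, Matrix.sub_mulVec, Matrix.one_mulVec,
    add_sub_cancel]

theorem slAction_of_coord_eq_zero (M : Matrix.SpecialLinearGroup (Fin 2) F) {x : V}
    (hx : P.coord x = 0) : P.slAction M x = x := by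
  rw [slAction_apply, hx, Matrix.mulVec_zero, map_zero, add_zero]

theorem slAction_mem_formIsometries (M : Matrix.SpecialLinearGroup (Fin 2) F) :
    P.slAction M ∈ formIsometries B := by
  intro x y
  obtain ⟨c, x, rfl, hx⟩ := P.exists_eq_embed_add x
  obtain ⟨d, y, rfl, hy⟩ := P.exists_eq_embed_add y
  have hdet := M.det_coe
  rw [Matrix.det_fin_two] at hdet
  have hxe (e : Fin 2 → F) : B x (P.embed e) = 0 := by
    rw [← P.isAlt.neg_eq, P.form_embed_eq_zero hx, neg_zero]
  rw [map_add, map_add (P.slAction M), slAction_embed, slAction_embed,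
    P.slAction_of_coord_eq_zero M hx, P.slAction_of_coord_eq_zero M hy]
  simp only [map_add, LinearMap.add_apply, form_embed_embed, P.form_embed_eq_zero hy, hxe]
  simp only [Matrix.mulVec, dotProduct, Fin.sum_univ_two]
  linear_combination (c 0 * d 1 - c 1 * d 0) * B P.w P.v * hdet

/-- The image of a hyperbolic pair under a similitude. -/
@[simps]
def map (g : V ≃ₗ[F] V) (hg : g ∈ formSimilitudes B) : HyperbolicPair B where
  isAlt := P.isAlt
  w := g P.w
  v := g P.v
  form_ne_zero := by
    obtain ⟨c, hc, h⟩ := hg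
    rw [h]
    exact mul_ne_zero hc P.form_ne_zero

theorem embed_map (g : V ≃ₗ[F] V) (hg : g ∈ formSimilitudes B) (c : Fin 2 → F) :
    (P.map g hg).embed c = g (P.embed c) := by
  simp [embed_apply]

theorem coord_map (g : V ≃ₗ[F] V) (hg : g ∈ formSimilitudes B) (x : V) :
    (P.map g hg).coord (g x) = P.coord x := by
  obtain ⟨c, hc, h⟩ := id hg
  simp [coord_apply, h, mul_div_mul_left, hc, ← mul_neg]

theorem slAction_map (g : V ≃ₗ[F] V) (hg : g ∈ formSimilitudes B)
    (M : Matrix.SpecialLinearGroup (Fin 2) F) :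
    (P.map g hg).slAction M = g * P.slAction M * g⁻¹ := by
  rw [eq_mul_inv_iff_mul_eq]
  ext x
  simp [slAction_apply, embed_map, coord_map]

/-- The plane spanned by a hyperbolic pair. -/
def plane : Submodule F V := Submodule.span F {P.w, P.v}

theorem mem_plane_iff {x : V} : x ∈ P.plane ↔ ∃ c, P.embed c = x := by
  simp [plane, Submodule.mem_span_pair, embed_apply, (finTwoArrowEquiv F).exists_congr_left]

theorem embed_mem_plane (c : Fin 2 → F) : P.embed c ∈ P.plane := P.mem_plane_iff.mpr ⟨c, rfl⟩

theorem w_mem_plane : P.w ∈ P.plane := Submodule.subset_span (by simp)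

theorem v_mem_plane : P.v ∈ P.plane := Submodule.subset_span (by simp)

theorem w_ne_zero : P.w ≠ 0 := by
  intro h
  simpa [h] using P.form_ne_zero

theorem form_eq_zero_of_mem_plane {x y : V} (hx : x ∈ P.plane) (hy : P.coord y = 0) :
    B x y = 0 := by
  obtain ⟨c, rfl⟩ := P.mem_plane_iff.mp hx
  exact P.form_embed_eq_zero hy c

theorem exists_smul_sub_of_mapsTo {g : V ≃ₗ[F] V} (hg : g ∈ formIsometries B)
    (hgP : ∀ x ∈ P.plane, g x ∈ P.plane) :
    ∃ τ : F, ∀ x ∈ P.plane, g (g x) = τ • g x - x := by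
  obtain ⟨c, hc⟩ := P.mem_plane_iff.mp (hgP _ P.w_mem_plane)
  obtain ⟨d, hd⟩ := P.mem_plane_iff.mp (hgP _ P.v_mem_plane)
  have hdet : c 0 * d 1 - c 1 * d 0 = 1 := by
    refine mul_right_cancel₀ P.form_ne_zero ?_
    rw [← form_embed_embed, hc, hd, hg, one_mul]
  rw [embed_apply] at hc hd
  refine ⟨c 0 + d 1, fun x hx => ?_⟩
  obtain ⟨e, rfl⟩ := P.mem_plane_iff.mp hx
  simp only [embed_apply, map_add, map_smul, ← hc, ← hd]
  match_scalars
  · linear_combination -e 0 * hdet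
  · linear_combination -e 1 * hdet

theorem eq_self_or_eq_neg_of_smul {g : V ≃ₗ[F] V} (hg : g ∈ formIsometries B) {c : F}
    (hc : ∀ x ∈ P.plane, g x = c • x) :
    (∀ x ∈ P.plane, g x = x) ∨ ∀ x ∈ P.plane, g x = -x := by
  have hcc : c * c = 1 := by
    have h := hg P.w P.v
    rw [hc _ P.w_mem_plane, hc _ P.v_mem_plane, map_smul, map_smul, LinearMap.smul_apply,
      smul_smul, smul_eq_mul] at h
    exact mul_right_cancel₀ P.form_ne_zero (h.trans (one_mul _).symm)
  rcases mul_self_eq_one_iff.mp hcc with rfl | rfl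
  · exact .inl fun x hx => by rw [hc x hx, one_smul]
  · exact .inr fun x hx => by rw [hc x hx, neg_one_smul]

/-- The involution acting as `-1` on the plane of a hyperbolic pair and as `1` on its orthogonal
complement. -/
noncomputable def t : V ≃ₗ[F] V := P.slAction (-1)

theorem t_mem_formIsometries : P.t ∈ formIsometries B := P.slAction_mem_formIsometries _

theorem t_mul_t : P.t * P.t = 1 := by rw [t, ← map_mul, neg_mul_neg, one_mul, map_one]

theorem t_apply_of_mem_plane {x : V} (hx : x ∈ P.plane) : P.t x = -x := by
  obtain ⟨c, rfl⟩ := P.mem_plane_iff.mp hx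
  rw [t, slAction_embed, Matrix.SpecialLinearGroup.coe_neg, Matrix.SpecialLinearGroup.coe_one,
    Matrix.neg_mulVec, Matrix.one_mulVec, map_neg]

theorem t_apply_of_coord_eq_zero {x : V} (hx : P.coord x = 0) : P.t x = x :=
  P.slAction_of_coord_eq_zero _ hx

theorem exists_eq_add_of_mem_plane (x : V) : ∃ y ∈ P.plane, ∃ c, x = y + c ∧ P.coord c = 0 := by
  obtain ⟨c, y, rfl, hy⟩ := P.exists_eq_embed_add x
  exact ⟨_, P.mem_plane_iff.mpr ⟨c, rfl⟩, y, rfl, hy⟩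

theorem coord_injOn_plane : Set.InjOn P.coord P.plane := by
  intro x hx y hy h
  obtain ⟨c, rfl⟩ := P.mem_plane_iff.mp hx
  obtain ⟨d, rfl⟩ := P.mem_plane_iff.mp hy
  rw [coord_embed, coord_embed] at h
  rw [h]

theorem finrank_plane : Module.finrank F P.plane = 2 := by
  have hrange : P.plane = LinearMap.range P.embed := by
    ext x
    exact P.mem_plane_iff
  rw [hrange, LinearMap.finrank_range_of_inj P.embed_injective, Module.finrank_fin_fun]

variable {P} {P' : HyperbolicPair B} {g : V ≃ₗ[F] V}

theorem map_plane_eq_of_mapsTo (hgP : ∀ x ∈ P.plane, g x ∈ P'.plane) :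
    P.plane.map (g : V →ₗ[F] V) = P'.plane := by
  have : FiniteDimensional F P'.plane := .of_finrank_pos (by rw [finrank_plane]; exact two_pos)
  refine Submodule.eq_of_le_of_finrank_eq (Submodule.map_le_iff_le_comap.mpr hgP) ?_
  rw [P'.finrank_plane, ← P.finrank_plane]
  exact g.finrank_map_eq P.plane

theorem coord_apply_eq_zero_of_mapsTo (hg : g ∈ formSimilitudes B)
    (hgP : ∀ x ∈ P.plane, g x ∈ P'.plane) {x : V} (hx : P.coord x = 0) : P'.coord (g x) = 0 := by
  have orth {y : V} (hy : y ∈ P'.plane) : B y (g x) = 0 := by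
    rw [← map_plane_eq_of_mapsTo hgP, Submodule.mem_map] at hy
    obtain ⟨z, hz, rfl⟩ := hy
    obtain ⟨c, -, hc⟩ := hg
    exact (hc z x).trans (by rw [P.form_eq_zero_of_mem_plane hz hx, mul_zero])
  exact P'.coord_eq_zero_iff.mpr ⟨orth P'.w_mem_plane, orth P'.v_mem_plane⟩

variable (P)

theorem commute_t_of_mapsTo (hg : g ∈ formIsometries B) (hgP : ∀ x ∈ P.plane, g x ∈ P.plane) :
    Commute g P.t := by
  have hgB := formIsometries_le_formSimilitudes hg
  ext x
  obtain ⟨y, hy, c, rfl, hc⟩ := P.exists_eq_add_of_mem_plane x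
  simp only [LinearEquiv.mul_apply, map_add, P.t_apply_of_mem_plane hy,
    P.t_apply_of_coord_eq_zero hc, P.t_apply_of_mem_plane (hgP y hy),
    P.t_apply_of_coord_eq_zero (coord_apply_eq_zero_of_mapsTo hgB hgP hc), map_neg]

section Involution

variable [NeZero (2 : F)]

theorem mem_plane_iff_t_apply {x : V} : x ∈ P.plane ↔ P.t x = -x := by
  refine ⟨P.t_apply_of_mem_plane, fun hx => ?_⟩
  obtain ⟨y, hy, c, rfl, hc⟩ := P.exists_eq_add_of_mem_plane x
  rw [map_add, P.t_apply_of_mem_plane hy, P.t_apply_of_coord_eq_zero hc] at hx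
  have hc0 : c = 0 := eq_zero_of_eq_neg_self (F := F) (by linear_combination (norm := module) hx)
  rwa [hc0, add_zero]

theorem coord_eq_zero_iff_t_apply {x : V} : P.coord x = 0 ↔ P.t x = x := by
  refine ⟨P.t_apply_of_coord_eq_zero, fun hx => ?_⟩
  obtain ⟨y, hy, c, rfl, hc⟩ := P.exists_eq_add_of_mem_plane x
  rw [map_add, P.t_apply_of_mem_plane hy, P.t_apply_of_coord_eq_zero hc] at hx
  have hy0 : y = 0 := eq_zero_of_eq_neg_self (F := F) (by linear_combination (norm := module) -hx)
  rwa [hy0, zero_add]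

theorem mem_plane_of_commute_t (hg : Commute g P.t) {x : V} (hx : x ∈ P.plane) : g x ∈ P.plane := by
  rw [mem_plane_iff_t_apply] at hx ⊢
  exact apply_eq_neg_of_commute hg hx

theorem eq_self_or_eq_neg_of_apply_apply (hg : g ∈ formIsometries B)
    (hgP : ∀ x ∈ P.plane, g x ∈ P.plane) (hgg : ∀ x ∈ P.plane, g (g x) = x) :
    (∀ x ∈ P.plane, g x = x) ∨ ∀ x ∈ P.plane, g x = -x := by
  obtain ⟨τ, hτ⟩ := P.exists_smul_sub_of_mapsTo hg hgP
  have hτg (x : V) (hx : x ∈ P.plane) : τ • g x = (2 : F) • x := by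
    have h := hτ x hx
    rw [hgg x hx] at h
    linear_combination (norm := module) -h
  have hτ0 : τ ≠ 0 := by
    rintro rfl
    have h := hτg P.w P.w_mem_plane
    rw [zero_smul, eq_comm, smul_eq_zero] at h
    exact h.elim two_ne_zero P.w_ne_zero
  refine P.eq_self_or_eq_neg_of_smul hg (c := τ⁻¹ * 2) fun x hx => ?_
  rw [mul_smul, ← hτg x hx, inv_smul_smul₀ hτ0]

end Involution

end HyperbolicPair

/-- `u` is a square root of the involution `t` acting trivially on the fixed vectors of `t`. -/
structure IsQuarterTurn {F V : Type*} [Field F] [AddCommGroup V] [Module F V]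
    (t u : V ≃ₗ[F] V) : Prop where
  mul_self : u * u = t
  apply_of_fixed : ∀ x, t x = x → u x = x

namespace IsQuarterTurn

variable {F V : Type*} [Field F] [AddCommGroup V] [Module F V] {t u : V ≃ₗ[F] V}

theorem commute (hu : IsQuarterTurn t u) : Commute u t := by
  rw [← hu.mul_self]
  exact (Commute.refl u).mul_right (Commute.refl u)

theorem inv_apply_of_fixed (hu : IsQuarterTurn t u) {x : V} (hx : t x = x) : u⁻¹ x = x :=
  u.symm_apply_eq.mpr (hu.apply_of_fixed x hx).symm

theorem inv (hu : IsQuarterTurn t u) (ht : t * t = 1) : IsQuarterTurn t u⁻¹ where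
  mul_self := by rw [← _root_.mul_inv_rev, hu.mul_self, inv_eq_of_mul_eq_one_left ht]
  apply_of_fixed _ := hu.inv_apply_of_fixed

theorem inv_apply_of_negated (hu : IsQuarterTurn t u) {x : V} (hx : t x = -x) :
    u⁻¹ x = -u x := by
  refine u.symm_apply_eq.mpr ?_
  rw [map_neg, ← LinearEquiv.mul_apply, hu.mul_self, hx, neg_neg]

end IsQuarterTurn

/-- A hyperbolic pair together with a solution of `a ^ 2 + b ^ 2 = -1`; these data determine a
quaternion group of isometries acting faithfully on the plane of the pair and trivially on its
orthogonal complement. -/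
structure QuaternionPlane {F V : Type*} [Field F] [AddCommGroup V] [Module F V]
    (B : LinearMap.BilinForm F V) extends HyperbolicPair B where
  a : F
  b : F
  sq_add_sq : a ^ 2 + b ^ 2 = -1

namespace QuaternionPlane

variable {F V : Type*} [Field F] [AddCommGroup V] [Module F V] {B : LinearMap.BilinForm F V}
  (Q : QuaternionPlane B)

/-- The first generator of the quaternion group, as a matrix. -/
def iMatrix (F : Type*) [Field F] : Matrix.SpecialLinearGroup (Fin 2) F :=
  ⟨!![0, -1; 1, 0], by simp [Matrix.det_fin_two]⟩

/-- The second generator of the quaternion group, as a matrix. -/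
def jMatrix : Matrix.SpecialLinearGroup (Fin 2) F :=
  ⟨!![Q.a, Q.b; Q.b, -Q.a], by rw [Matrix.det_fin_two_of]; linear_combination -Q.sq_add_sq⟩

theorem coe_iMatrix : (iMatrix F : Matrix (Fin 2) (Fin 2) F) = !![0, -1; 1, 0] := rfl

theorem coe_jMatrix : (Q.jMatrix : Matrix (Fin 2) (Fin 2) F) = !![Q.a, Q.b; Q.b, -Q.a] := rfl

/-- The first generator of the quaternion group, as an automorphism of the space. -/
noncomputable def i : V ≃ₗ[F] V := Q.slAction (iMatrix F)

/-- The second generator of the quaternion group, as an automorphism of the space. -/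
noncomputable def j : V ≃ₗ[F] V := Q.slAction Q.jMatrix

theorem i_mem_formIsometries : Q.i ∈ formIsometries B := Q.slAction_mem_formIsometries _

theorem j_mem_formIsometries : Q.j ∈ formIsometries B := Q.slAction_mem_formIsometries _

theorem i_mul_i : Q.i * Q.i = Q.t := by
  have h : iMatrix F * iMatrix F = -1 := by
    ext r s
    fin_cases r <;> fin_cases s <;> simp [coe_iMatrix]
  rw [i, HyperbolicPair.t, ← map_mul, h]

theorem j_mul_j : Q.j * Q.j = Q.t := by
  have h : Q.jMatrix * Q.jMatrix = -1 := by
    ext r s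
    fin_cases r <;> fin_cases s <;> simp [coe_jMatrix] <;> grind [Q.sq_add_sq]
  rw [j, HyperbolicPair.t, ← map_mul, h]

theorem i_mul_j : Q.i * Q.j = Q.t * (Q.j * Q.i) := by
  have h : iMatrix F * Q.jMatrix = -1 * (Q.jMatrix * iMatrix F) := by
    ext r s
    fin_cases r <;> fin_cases s <;> simp [coe_iMatrix, coe_jMatrix]
  rw [i, j, HyperbolicPair.t, ← map_mul, ← map_mul, ← map_mul, h]

theorem i_w : Q.i Q.w = Q.v := by
  simpa [HyperbolicPair.embed_apply, i, coe_iMatrix] using Q.slAction_embed (iMatrix F) ![1, 0]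

theorem i_v : Q.i Q.v = -Q.w := by
  simpa [HyperbolicPair.embed_apply, i, coe_iMatrix] using Q.slAction_embed (iMatrix F) ![0, 1]

theorem j_w : Q.j Q.w = Q.a • Q.w + Q.b • Q.v := by
  simpa [HyperbolicPair.embed_apply, j, coe_jMatrix] using Q.slAction_embed Q.jMatrix ![1, 0]

theorem j_v : Q.j Q.v = Q.b • Q.w - Q.a • Q.v := by
  simpa [HyperbolicPair.embed_apply, j, coe_jMatrix, ← sub_eq_add_neg] using
    Q.slAction_embed Q.jMatrix ![0, 1]

/-- The image of a quaternion plane under a similitude. -/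
def map (g : V ≃ₗ[F] V) (hg : g ∈ formSimilitudes B) : QuaternionPlane B where
  toHyperbolicPair := Q.toHyperbolicPair.map g hg
  a := Q.a
  b := Q.b
  sq_add_sq := Q.sq_add_sq

theorem map_i (g : V ≃ₗ[F] V) (hg : g ∈ formSimilitudes B) : (Q.map g hg).i = g * Q.i * g⁻¹ :=
  Q.slAction_map g hg _

theorem map_j (g : V ≃ₗ[F] V) (hg : g ∈ formSimilitudes B) : (Q.map g hg).j = g * Q.j * g⁻¹ :=
  Q.slAction_map g hg _

section Involution

variable [NeZero (2 : F)]

theorem isQuarterTurn_i : IsQuarterTurn Q.t Q.i :=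
  ⟨Q.i_mul_i, fun _ hx => Q.slAction_of_coord_eq_zero _ (Q.coord_eq_zero_iff_t_apply.mpr hx)⟩

theorem isQuarterTurn_j : IsQuarterTurn Q.t Q.j :=
  ⟨Q.j_mul_j, fun _ hx => Q.slAction_of_coord_eq_zero _ (Q.coord_eq_zero_iff_t_apply.mpr hx)⟩

theorem isQuarterTurn_i_mul_j : IsQuarterTurn Q.t (Q.i * Q.j) where
  mul_self := by
    have hj := Q.isQuarterTurn_j.commute.eq
    calc Q.i * Q.j * (Q.i * Q.j) = Q.i * Q.j * (Q.t * (Q.j * Q.i)) := by rw [← Q.i_mul_j]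
      _ = Q.i * (Q.j * Q.t) * (Q.j * Q.i) := by group
      _ = Q.i * Q.t * (Q.j * Q.j) * Q.i := by rw [hj]; group
      _ = Q.i * (Q.t * Q.t) * Q.i := by rw [Q.j_mul_j]; group
      _ = Q.t := by rw [Q.t_mul_t, mul_one, Q.i_mul_i]
  apply_of_fixed x hx := by
    rw [LinearEquiv.mul_apply, Q.isQuarterTurn_j.apply_of_fixed x hx,
      Q.isQuarterTurn_i.apply_of_fixed x hx]

theorem eq_self_or_eq_neg_of_apply_comm {g : V ≃ₗ[F] V} (hg : g ∈ formIsometries B)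
    (hplane : ∀ x ∈ Q.plane, g x ∈ Q.plane) (hi : ∀ x ∈ Q.plane, g (Q.i x) = Q.i (g x))
    (hj : ∀ x ∈ Q.plane, g (Q.j x) = Q.j (g x)) :
    (∀ x ∈ Q.plane, g x = x) ∨ ∀ x ∈ Q.plane, g x = -x := by
  obtain ⟨c, hc⟩ := Q.mem_plane_iff.mp (hplane _ Q.w_mem_plane)
  rw [Q.embed_apply] at hc
  have hgv : g Q.v = c 0 • Q.v - c 1 • Q.w := by
    rw [← Q.i_w, hi _ Q.w_mem_plane, ← hc, map_add, map_smul, map_smul, Q.i_w, Q.i_v]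
    module
  have hgj := hj _ Q.w_mem_plane
  rw [Q.j_w, map_add, map_smul, map_smul, hgv, ← hc, map_add, map_smul, map_smul, Q.j_w,
    Q.j_v] at hgj
  have hgj2 : (2 : F) • (c 1 • (Q.a • Q.v - Q.b • Q.w)) = 0 := by
    linear_combination (norm := module) hgj
  have hcj : c 1 • (Q.a • Q.v - Q.b • Q.w) = 0 := (smul_eq_zero.mp hgj2).resolve_left two_ne_zero
  have hc1 : c 1 = 0 := by
    refine (smul_eq_zero.mp hcj).resolve_right fun h => Q.w_ne_zero ?_
    have hjv : Q.j (Q.i Q.w) = Q.b • Q.w - Q.a • Q.v := by rw [Q.i_w, Q.j_v]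
    rw [← neg_sub, h, neg_zero] at hjv
    simpa using hjv
  refine Q.eq_self_or_eq_neg_of_smul hg (c := c 0) fun x hx => ?_
  obtain ⟨d, rfl⟩ := Q.mem_plane_iff.mp hx
  rw [Q.embed_apply, map_add, map_smul, map_smul, ← hc, hgv, hc1]
  module

theorem eq_self_or_eq_neg_of_commute {g : V ≃ₗ[F] V} (hg : g ∈ formIsometries B)
    (hi : Commute g Q.i) (hj : Commute g Q.j) :
    (∀ x ∈ Q.plane, g x = x) ∨ ∀ x ∈ Q.plane, g x = -x := by
  have ht : Commute g Q.t := Q.i_mul_i ▸ hi.mul_right hi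
  exact Q.eq_self_or_eq_neg_of_apply_comm hg (fun _ => Q.mem_plane_of_commute_t ht)
    (fun x _ => apply_comm_of_commute hi x) fun x _ => apply_comm_of_commute hj x

end Involution

end QuaternionPlane

open scoped commutatorElement

section Normalizer

variable {G : Type*} [Group G] {N : Subgroup G} {u n : G}

theorem conj_mem_of_mem_normalizer (hu : u ∈ Subgroup.normalizer (N : Set G)) (hn : n ∈ N) :
    u * n * u⁻¹ ∈ N :=
  (Subgroup.mem_normalizer_iff.mp hu n).mp hn

theorem commutatorElement_mem_of_mem_normalizer (hu : u ∈ Subgroup.normalizer (N : Set G))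
    (hn : n ∈ N) : ⁅u, n⁆ ∈ N :=
  N.mul_mem (conj_mem_of_mem_normalizer hu hn) (N.inv_mem hn)

end Normalizer

section SubInv

variable {F V : Type*} [Field F] [AddCommGroup V] [Module F V]

/-- The endomorphism `s - s⁻¹`. When an involution `t` inverts `s` by conjugation, it anticommutes
with `t`, hence exchanges the two eigenspaces of `t`. -/
noncomputable def subInv (s : V ≃ₗ[F] V) : Module.End F V :=
  (s : V →ₗ[F] V) - ((s⁻¹ : V ≃ₗ[F] V) : V →ₗ[F] V)

theorem subInv_apply (s : V ≃ₗ[F] V) (x : V) : subInv s x = s x - s⁻¹ x := rfl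

theorem subInv_subInv (s : V ≃ₗ[F] V) (x : V) :
    subInv s (subInv s x) = s (s x) - (2 : F) • x + s⁻¹ (s⁻¹ x) := by
  have h1 : s (s⁻¹ x) = x := s.apply_symm_apply x
  have h2 : s⁻¹ (s x) = x := s.symm_apply_apply x
  simp only [subInv_apply, map_sub, h1, h2]
  module

theorem subInv_conj_comm {s u : V ≃ₗ[F] V} (h : Commute s (u * s * u⁻¹)) (x : V) :
    subInv s (u (subInv s (u⁻¹ x))) = u (subInv s (u⁻¹ (subInv s x))) := by
  have comm {g h : V ≃ₗ[F] V} (hgh : Commute g (u * h * u⁻¹)) :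
      g (u (h (u⁻¹ x))) = u (h (u⁻¹ (g x))) := LinearEquiv.congr_fun hgh.eq x
  have hinv : Commute s (u * s⁻¹ * u⁻¹) := conj_inv (a := s) (b := u) ▸ h.inv_right
  have hinv' : Commute s⁻¹ (u * s⁻¹ * u⁻¹) := conj_inv (a := s) (b := u) ▸ h.inv_inv
  simp only [subInv_apply, map_sub]
  rw [comm h, comm hinv, comm h.inv_left, comm hinv']
  abel

variable {t s u : V ≃ₗ[F] V}

theorem apply_subInv_of_negated (ht : t * t = 1) (hs : t * s * t⁻¹ = s⁻¹) {x : V} (hx : t x = -x) :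
    t (subInv s x) = subInv s x := by
  have hts : t * s = s⁻¹ * t := by rw [← hs]; group
  have hts' : t * s⁻¹ = s * t := by
    rw [← hs]
    have : t⁻¹ = t := inv_eq_of_mul_eq_one_left ht
    calc t * (t * s * t⁻¹) = (t * t) * s * t⁻¹ := by group
      _ = s * t := by rw [ht, one_mul, this]
  have h1 : t (s x) = s⁻¹ (t x) := LinearEquiv.congr_fun hts x
  have h2 : t (s⁻¹ x) = s (t x) := LinearEquiv.congr_fun hts' x
  rw [subInv_apply, map_sub, h1, h2, hx, map_neg, map_neg]
  abel

theorem IsQuarterTurn.apply_subInv_subInv (hu : IsQuarterTurn t u) (ht : t * t = 1)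
    (hs : t * s * t⁻¹ = s⁻¹) (hc : Commute s (u * s * u⁻¹)) {x : V} (hx : t x = -x) :
    u (subInv s (subInv s x)) = -subInv s (subInv s (u x)) := by
  have h := subInv_conj_comm hc x
  have hux : t (u⁻¹ x) = -u⁻¹ x := apply_eq_neg_of_commute hu.commute.inv_left hx
  rw [hu.apply_of_fixed _ (apply_subInv_of_negated ht hs hux),
    hu.inv_apply_of_fixed (apply_subInv_of_negated ht hs hx), hu.inv_apply_of_negated hx] at h
  rw [← h, map_neg, map_neg]

end SubInv

namespace QuaternionPlane

variable {F V : Type*} [Field F] [AddCommGroup V] [Module F V] {B : LinearMap.BilinForm F V}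

section Normalized

variable [NeZero (2 : F)] (Q : QuaternionPlane B)

theorem i_apply_mem_plane {x : V} (hx : x ∈ Q.plane) : Q.i x ∈ Q.plane :=
  Q.mem_plane_of_commute_t Q.isQuarterTurn_i.commute hx

theorem j_apply_mem_plane {x : V} (hx : x ∈ Q.plane) : Q.j x ∈ Q.plane :=
  Q.mem_plane_of_commute_t Q.isQuarterTurn_j.commute hx

theorem i_j_ne_j_i {x : V} (hx : x ∈ Q.plane) (hx0 : x ≠ 0) : Q.i (Q.j x) ≠ Q.j (Q.i x) := by
  intro h
  have hij : Q.i (Q.j x) = Q.t (Q.j (Q.i x)) := LinearEquiv.congr_fun Q.i_mul_j x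
  rw [h, Q.t_apply_of_mem_plane (Q.j_apply_mem_plane (Q.i_apply_mem_plane hx))] at hij
  simpa [hx0] using eq_zero_of_eq_neg_self (F := F) hij

section NormalizedSubgroup

variable {N : Subgroup (V ≃ₗ[F] V)} (hN : ∀ x ∈ N, ∀ y ∈ N, Commute x y)
  (hi : Q.i ∈ Subgroup.normalizer (N : Set (V ≃ₗ[F] V)))
  (hj : Q.j ∈ Subgroup.normalizer (N : Set (V ≃ₗ[F] V)))

include hN hi hj

theorem subInv_subInv_eq_zero {s : V ≃ₗ[F] V} (hs : s ∈ N) (hts : Q.t * s * Q.t⁻¹ = s⁻¹) {x : V}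
    (hx : x ∈ Q.plane) : subInv s (subInv s x) = 0 := by
  have anti {u : V ≃ₗ[F] V} (hu : IsQuarterTurn Q.t u)
      (hun : u ∈ Subgroup.normalizer (N : Set (V ≃ₗ[F] V))) {y : V} (hy : y ∈ Q.plane) :
      u (subInv s (subInv s y)) = -subInv s (subInv s (u y)) :=
    hu.apply_subInv_subInv Q.t_mul_t hts (hN s hs _ (conj_mem_of_mem_normalizer hun hs))
      (Q.t_apply_of_mem_plane hy)
  have h1 := anti Q.isQuarterTurn_i hi (Q.j_apply_mem_plane hx)
  have h2 := anti Q.isQuarterTurn_j hj hx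
  have h3 := anti Q.isQuarterTurn_i_mul_j (mul_mem hi hj) hx
  rw [LinearEquiv.mul_apply, LinearEquiv.mul_apply, h2, map_neg, h1, neg_neg] at h3
  have h0 := eq_zero_of_eq_neg_self (F := F) h3
  rw [h0, neg_zero, LinearEquiv.map_eq_zero_iff] at h1
  rwa [h1, neg_zero, LinearEquiv.map_eq_zero_iff] at h2

theorem not_forall_conj_t_eq_self {n : V ≃ₗ[F] V} (hn : n ∈ N) :
    ¬ ∀ x ∈ Q.plane, (n * Q.t * n⁻¹) x = x := by
  intro h
  have commutator_apply {u : V ≃ₗ[F] V} (hu : IsQuarterTurn Q.t u) {x : V} (hx : x ∈ Q.plane) :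
      ⁅u, n⁆ x = u x := by
    have hfix : Q.t (n⁻¹ x) = n⁻¹ x := n.injective (by
      simpa only [LinearEquiv.mul_apply, LinearEquiv.coe_inv, LinearEquiv.apply_symm_apply]
        using h x hx)
    rw [commutatorElement_def]
    simp only [LinearEquiv.mul_apply]
    rw [hu.inv_apply_of_fixed hfix, LinearEquiv.coe_inv, LinearEquiv.apply_symm_apply]
  have hcomm : Commute ⁅Q.i, n⁆ ⁅Q.j, n⁆ := hN _ (commutatorElement_mem_of_mem_normalizer hi hn) _
    (commutatorElement_mem_of_mem_normalizer hj hn)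
  have hw := apply_comm_of_commute hcomm Q.w
  rw [commutator_apply Q.isQuarterTurn_i Q.w_mem_plane,
    commutator_apply Q.isQuarterTurn_j Q.w_mem_plane,
    commutator_apply Q.isQuarterTurn_i (Q.j_apply_mem_plane Q.w_mem_plane),
    commutator_apply Q.isQuarterTurn_j (Q.i_apply_mem_plane Q.w_mem_plane)] at hw
  exact Q.i_j_ne_j_i Q.w_mem_plane Q.w_ne_zero hw

variable (hiso : N ≤ formIsometries B) (hord : ∀ x ∈ N, (orderOf x : F) ≠ 0)

include hord

theorem apply_apply_eq_self {s : V ≃ₗ[F] V} (hs : s ∈ N) (hts : Q.t * s * Q.t⁻¹ = s⁻¹) {x : V}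
    (hx : x ∈ Q.plane) : s (s x) = x := by
  have h := congrArg (fun y => s (s y)) (Q.subInv_subInv_eq_zero hN hi hj hs hts hx)
  simp only [subInv_subInv, map_add, map_sub, map_smul, LinearEquiv.coe_inv,
    LinearEquiv.apply_symm_apply, map_zero] at h
  refine apply_eq_self_of_apply_sub_eq (hord _ (N.mul_mem hs hs)) ?_
  simp only [LinearEquiv.mul_apply, map_sub]
  linear_combination (norm := module) h

include hiso

theorem commute_t_of_inverted {s : V ≃ₗ[F] V} (hs : s ∈ N) (hts : Q.t * s * Q.t⁻¹ = s⁻¹) :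
    Commute s Q.t := by
  refine Q.commute_t_of_mapsTo (hiso hs) fun x hx => ?_
  have hts' : Q.t * s = s⁻¹ * Q.t := by rw [← hts]; group
  have hsx : s⁻¹ x = s x :=
    s.symm_apply_eq.mpr (Q.apply_apply_eq_self hN hi hj hord hs hts hx).symm
  rw [Q.mem_plane_iff_t_apply, ← LinearEquiv.mul_apply, hts', LinearEquiv.mul_apply,
    Q.t_apply_of_mem_plane hx, map_neg, hsx]

theorem conj_t_eq_self_or_eq_neg {n : V ≃ₗ[F] V} (hn : n ∈ N) :
    (∀ x ∈ Q.plane, (n * Q.t * n⁻¹) x = x) ∨ ∀ x ∈ Q.plane, (n * Q.t * n⁻¹) x = -x := by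
  have ht : Q.t⁻¹ = Q.t := inv_eq_of_mul_eq_one_left Q.t_mul_t
  have htN : Q.t ∈ Subgroup.normalizer (N : Set (V ≃ₗ[F] V)) := Q.i_mul_i ▸ mul_mem hi hi
  have hs : ⁅Q.t, n⁆ ∈ N := commutatorElement_mem_of_mem_normalizer htN hn
  have hts : Q.t * ⁅Q.t, n⁆ * Q.t⁻¹ = ⁅Q.t, n⁆⁻¹ := by
    rw [commutatorElement_inv, commutatorElement_def, commutatorElement_def, ht]
    calc Q.t * (Q.t * n * Q.t * n⁻¹) * Q.t = (Q.t * Q.t) * (n * Q.t * n⁻¹ * Q.t) := by group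
      _ = n * Q.t * n⁻¹ * Q.t := by rw [Q.t_mul_t, one_mul]
  have hcomm : Commute (n * Q.t * n⁻¹) Q.t := by
    have h : n * Q.t * n⁻¹ = Q.t⁻¹ * ⁅Q.t, n⁆ := by
      nth_rewrite 1 [← ht]
      rw [commutatorElement_def]
      group
    rw [h, ht]
    exact (Commute.refl Q.t).mul_left (Q.commute_t_of_inverted hN hi hj hiso hord hs hts)
  refine Q.eq_self_or_eq_neg_of_apply_apply
    (conj_mem_formIsometries (formIsometries_le_formSimilitudes (hiso hn)) Q.t_mem_formIsometries)
    (fun x hx => Q.mem_plane_of_commute_t hcomm hx) fun x _ => ?_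
  have h : n * Q.t * n⁻¹ * (n * Q.t * n⁻¹) = 1 := by
    rw [conj_mul, Q.t_mul_t, mul_one, mul_inv_cancel]
  exact LinearEquiv.congr_fun h x

theorem commute_t_of_mem_normalized {n : V ≃ₗ[F] V} (hn : n ∈ N) : Commute n Q.t := by
  have hneg := (Q.conj_t_eq_self_or_eq_neg hN hi hj hiso hord hn).resolve_left
    (Q.not_forall_conj_t_eq_self hN hi hj hn)
  refine Commute.inv_left_iff.mp (Q.commute_t_of_mapsTo (inv_mem (hiso hn)) fun x hx => ?_)
  have h := hneg x hx
  rw [LinearEquiv.mul_apply, LinearEquiv.mul_apply] at h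
  rw [Q.mem_plane_iff_t_apply]
  exact n.injective (by rw [h, map_neg, LinearEquiv.coe_inv, LinearEquiv.apply_symm_apply])

end NormalizedSubgroup

end Normalized

/-- The group generated by the quaternion groups of two quaternion planes. -/
def join (Q Q' : QuaternionPlane B) : Subgroup (V ≃ₗ[F] V) :=
  Subgroup.closure {Q.i, Q.j, Q'.i, Q'.j}

section Join

variable (Q Q' : QuaternionPlane B)

theorem join_comm : join Q Q' = join Q' Q := by
  unfold join
  congr 1
  ext x
  simp only [Set.mem_insert_iff, Set.mem_singleton_iff]
  tauto

theorem join_le {H : Subgroup (V ≃ₗ[F] V)} :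
    join Q Q' ≤ H ↔ (Q.i ∈ H ∧ Q.j ∈ H) ∧ Q'.i ∈ H ∧ Q'.j ∈ H := by
  simp [join, Subgroup.closure_le, Set.insert_subset_iff, and_assoc]

theorem i_mem_join : Q.i ∈ join Q Q' := ((join_le Q Q').mp le_rfl).1.1

theorem j_mem_join : Q.j ∈ join Q Q' := ((join_le Q Q').mp le_rfl).1.2

theorem t_mem_join : Q.t ∈ join Q Q' := Q.i_mul_i ▸ mul_mem (i_mem_join Q Q') (i_mem_join Q Q')

theorem t_mem_join' : Q'.t ∈ join Q Q' := join_comm Q Q' ▸ t_mem_join Q' Q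

theorem join_le_formIsometries : join Q Q' ≤ formIsometries B :=
  (join_le Q Q').mpr ⟨⟨Q.i_mem_formIsometries, Q.j_mem_formIsometries⟩,
    Q'.i_mem_formIsometries, Q'.j_mem_formIsometries⟩

theorem coord_sub_eq_zero_of_forall_mem_plane {g : V ≃ₗ[F] V} (hg : g ∈ formIsometries B)
    (h : ∀ x ∈ Q.plane, g x = x) (x : V) : Q.coord (g x - x) = 0 := by
  have orth {y : V} (hy : y ∈ Q.plane) : B y (g x - x) = 0 := by
    rw [map_sub, sub_eq_zero]
    nth_rewrite 1 [← h y hy]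
    exact hg y x
  exact Q.coord_eq_zero_iff.mpr ⟨orth Q.w_mem_plane, orth Q.v_mem_plane⟩

end Join

variable [NeZero (2 : F)] {Q Q' : QuaternionPlane B}

theorem apply_eq_self_of_mem_join {y : V ≃ₗ[F] V} (hy : y ∈ join Q Q') {x : V}
    (hx : Q.t x = x) (hx' : Q'.t x = x) : y x = x := by
  have h : join Q Q' ≤ MulAction.stabilizer (V ≃ₗ[F] V) x := (join_le Q Q').mpr
    ⟨⟨Q.isQuarterTurn_i.apply_of_fixed x hx, Q.isQuarterTurn_j.apply_of_fixed x hx⟩,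
      Q'.isQuarterTurn_i.apply_of_fixed x hx', Q'.isQuarterTurn_j.apply_of_fixed x hx'⟩
  exact h hy

theorem eq_one_of_mem_join {n : V ≃ₗ[F] V} (hn : n ∈ join Q Q') (hord : (orderOf n : F) ≠ 0)
    (h : ∀ x ∈ Q.plane, n x = x) (h' : ∀ x ∈ Q'.plane, n x = x) : n = 1 := by
  ext x
  have hiso := join_le_formIsometries Q Q' hn
  refine apply_eq_self_of_apply_sub_eq hord (apply_eq_self_of_mem_join hn ?_ ?_)
  · exact Q.coord_eq_zero_iff_t_apply.mp (Q.coord_sub_eq_zero_of_forall_mem_plane hiso h x)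
  · exact Q'.coord_eq_zero_iff_t_apply.mp (Q'.coord_sub_eq_zero_of_forall_mem_plane hiso h' x)

theorem eq_one_of_commute_t (hQ : ¬ Commute Q.t Q'.t) {d : V ≃ₗ[F] V} (hd : d ∈ formIsometries B)
    (hord : (orderOf d : F) ≠ 0) (ht : Commute d Q.t) (ht' : Commute d Q'.t)
    (hfix : ∀ x, Q.t x = x → d x = x) : d = 1 := by
  obtain ⟨τ, hτ⟩ := Q.exists_smul_sub_of_mapsTo hd fun x => Q.mem_plane_of_commute_t ht
  obtain rfl | hτ2 := eq_or_ne τ 2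
  · ext x
    obtain ⟨y, c, rfl, hy, hc⟩ := exists_add_of_involution Q.t_mul_t x
    rw [map_add, hfix c hc, apply_eq_self_of_apply_sub_eq hord (x := y)]
    · rfl
    · rw [map_sub, hτ y (Q.mem_plane_iff_t_apply.mpr hy)]
      module
  have sub_mem (z : V) : d z - z ∈ Q.plane := by
    obtain ⟨y, c, rfl, hy, hc⟩ := exists_add_of_involution Q.t_mul_t z
    rw [← Q.mem_plane_iff_t_apply] at hy
    rw [map_add, hfix c hc, add_sub_add_right_eq_sub]
    exact sub_mem (Q.mem_plane_of_commute_t ht hy) hy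
  refine absurd (Q.commute_t_of_mapsTo Q'.t_mem_formIsometries fun x hx => ?_).symm hQ
  -- `d - 1` is invertible on the plane since `(d - 1) ^ 2 = (τ - 2) d` there.
  obtain ⟨z, rfl⟩ : ∃ z, d z - z = x := by
    have hy : d⁻¹ x ∈ Q.plane := Q.mem_plane_of_commute_t ht.inv_left hx
    have hdy := hτ _ hy
    have hdx : d (d⁻¹ x) = x := d.apply_symm_apply x
    rw [hdx] at hdy
    refine ⟨(τ - 2)⁻¹ • (x - d⁻¹ x), ?_⟩
    rw [map_smul, map_sub, hdy, hdx, ← smul_sub, inv_smul_eq_iff₀ (sub_ne_zero.mpr hτ2)]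
    module
  rw [map_sub, ← apply_comm_of_commute ht']
  exact sub_mem _

section AbelianNormal

variable (hQ : ¬ Commute Q.t Q'.t) {N : Subgroup (V ≃ₗ[F] V)}
  (hN : ∀ x ∈ N, ∀ y ∈ N, Commute x y)
  (hYN : join Q Q' ≤ Subgroup.normalizer (N : Set (V ≃ₗ[F] V)))
  (hiso : N ≤ formIsometries B) (hord : ∀ x ∈ N, (orderOf x : F) ≠ 0)

include hQ hN hYN hiso hord

theorem commute_i_and_j_of_mem_normalized {n : V ≃ₗ[F] V} (hn : n ∈ N) :
    Commute n Q.i ∧ Commute n Q.j := by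
  have ht {m} (hm : m ∈ N) : Commute m Q.t := Q.commute_t_of_mem_normalized hN
    (hYN (i_mem_join Q Q')) (hYN (j_mem_join Q Q')) hiso hord hm
  have ht' {m} (hm : m ∈ N) : Commute m Q'.t := by
    rw [join_comm] at hYN
    exact Q'.commute_t_of_mem_normalized hN (hYN (i_mem_join Q' Q)) (hYN (j_mem_join Q' Q)) hiso
      hord hm
  have comm {u : V ≃ₗ[F] V} (huY : u ∈ join Q Q') (hu : IsQuarterTurn Q.t u) : Commute n u := by
    have hd : ⁅u, n⁆ ∈ N := commutatorElement_mem_of_mem_normalizer (hYN huY) hn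
    refine (commutatorElement_eq_one_iff_commute.mp
      (eq_one_of_commute_t hQ (hiso hd) (hord _ hd) (ht hd) (ht' hd) fun x hx => ?_)).symm
    have hnx : Q.t (n⁻¹ x) = n⁻¹ x := apply_eq_self_of_commute (ht hn).inv_left hx
    rw [commutatorElement_def]
    simp only [LinearEquiv.mul_apply]
    rw [hu.inv_apply_of_fixed hnx, LinearEquiv.coe_inv, LinearEquiv.apply_symm_apply,
      hu.apply_of_fixed x hx]
  exact ⟨comm (i_mem_join Q Q') Q.isQuarterTurn_i, comm (j_mem_join Q Q') Q.isQuarterTurn_j⟩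

theorem commute_of_mem_normalized {n : V ≃ₗ[F] V} (hn : n ∈ N) {y : V ≃ₗ[F] V}
    (hy : y ∈ join Q Q') : Commute n y := by
  have h := commute_i_and_j_of_mem_normalized hQ hN hYN hiso hord hn
  have h' := commute_i_and_j_of_mem_normalized (fun h => hQ h.symm) hN
    (join_comm Q Q' ▸ hYN) hiso hord hn
  have hle : join Q Q' ≤ Subgroup.centralizer {n} := by
    simp only [join_le, Subgroup.mem_centralizer_singleton_iff]
    exact ⟨⟨h.1.eq.symm, h.2.eq.symm⟩, h'.1.eq.symm, h'.2.eq.symm⟩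
  exact (Subgroup.mem_centralizer_singleton_iff.mp (hle hy)).symm

end AbelianNormal

theorem exists_t_apply_sub_ne_zero (hQ : ¬ Commute Q.t Q'.t) :
    ∃ x ∈ Q.plane, Q'.t x - x ≠ 0 ∧ Q'.t x - x ∈ Q'.plane := by
  by_contra! h
  refine hQ (Q.commute_t_of_mapsTo Q'.t_mem_formIsometries fun x hx => ?_).symm
  have hmem : Q'.t x - x ∈ Q'.plane := by
    rw [Q'.mem_plane_iff_t_apply, map_sub, ← LinearEquiv.mul_apply, Q'.t_mul_t, neg_sub]
    rfl
  rwa [sub_eq_zero.mp (not_imp_not.mp (h x hx) hmem)]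

theorem eq_one_or_eq_neg_of_central (hQ : ¬ Commute Q.t Q'.t) {n : V ≃ₗ[F] V}
    (hn : n ∈ join Q Q') (hord : (orderOf n : F) ≠ 0) (hc : ∀ y ∈ join Q Q', Commute n y) :
    n = 1 ∨ (∀ x ∈ Q.plane, n x = -x) ∧ ∀ x ∈ Q'.plane, n x = -x := by
  have hiso := join_le_formIsometries Q Q' hn
  have hQs := Q.eq_self_or_eq_neg_of_commute hiso (hc _ (i_mem_join Q Q')) (hc _ (j_mem_join Q Q'))
  have hQs' := Q'.eq_self_or_eq_neg_of_commute hiso (hc _ (join_comm Q Q' ▸ i_mem_join Q' Q))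
    (hc _ (join_comm Q Q' ▸ j_mem_join Q' Q))
  obtain ⟨x, hx, hne, hx'⟩ := exists_t_apply_sub_ne_zero hQ
  have e : n (Q'.t x - x) = Q'.t (n x) - n x := by
    rw [map_sub, apply_comm_of_commute (hc _ (t_mem_join' Q Q'))]
  rcases hQs with h | h <;> rcases hQs' with h' | h'
  · exact .inl (eq_one_of_mem_join hn hord h h')
  · rw [h' _ hx', h x hx] at e
    exact absurd (eq_zero_of_eq_neg_self (F := F) e.symm) hne
  · rw [h' _ hx', h x hx, map_neg] at e
    refine absurd (eq_zero_of_eq_neg_self (F := F) ?_) hne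
    linear_combination (norm := module) e
  · exact .inr ⟨h, h'⟩

end QuaternionPlane

section SolvableGroups

variable {G : Type*} [Group G]

theorem eq_of_braid {u v : G} (h : u * v * u = v * u * v) (h3 : ¬ 3 ∣ orderOf (u * v)) :
    u = v := by
  have hu : u * (u * v * u) = u * v * u * v := by
    nth_rewrite 1 [h]; simp only [mul_assoc]
  have hv : v * (u * v * u) = u * v * u * u := by
    nth_rewrite 2 [h]; simp only [mul_assoc]
  have hcube : (u * v) ^ 3 = (u * v * u) * (u * v * u) := by
    nth_rewrite 2 [h]; simp only [pow_succ, pow_zero, one_mul, mul_assoc]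
  have hcomm_cube : Commute u ((u * v) ^ 3) := by
    rw [hcube, Commute, SemiconjBy, ← mul_assoc, hu, mul_assoc, hv]
    simp only [mul_assoc]
  -- `u * v` is a power of its cube.
  obtain ⟨k, hk⟩ := exists_pow_eq_self_of_coprime
    ((Nat.Prime.coprime_iff_not_dvd Nat.prime_three).mpr h3)
  have hcomm_mul : Commute u (u * v) := hk ▸ hcomm_cube.pow_right k
  have hcomm : Commute u v := mul_left_cancel (hcomm_mul.eq.trans (mul_assoc u v u))
  rw [mul_assoc, ← hcomm.eq, mul_assoc u v v] at h
  exact mul_right_cancel (mul_left_cancel h)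

theorem mem_zpowers_iff_of_mul_self {z : G} (hz : z * z = 1) {x : G} :
    x ∈ Subgroup.zpowers z ↔ x = 1 ∨ x = z := by
  refine ⟨?_, by rintro (rfl | rfl) <;> simp [one_mem]⟩
  rintro ⟨n, rfl⟩
  have hz2 : z ^ (2 : ℤ) = 1 := by rw [zpow_two, hz]
  rcases Int.even_or_odd' n with ⟨k, rfl | rfl⟩
  · exact .inl (by simp [_root_.zpow_mul, hz2])
  · exact .inr (by simp [_root_.zpow_add, _root_.zpow_mul, hz2])

theorem exists_ne_one_commute {A : Subgroup G} (hA : ∀ x ∈ A, x * x = 1) (hne : ∃ x ∈ A, x ≠ 1)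
    {u : G} (hu : ∀ x ∈ A, u * x * u⁻¹ ∈ A) (huu : ∀ x ∈ A, Commute (u * u) x) :
    ∃ x ∈ A, x ≠ 1 ∧ Commute u x := by
  obtain ⟨a, ha, ha1⟩ := hne
  have hinv {x : G} (hx : x ∈ A) : x⁻¹ = x := inv_eq_of_mul_eq_one_left (hA x hx)
  by_cases h : ⁅u, a⁆ = 1
  · exact ⟨a, ha, ha1, commutatorElement_eq_one_iff_commute.mp h⟩
  have hmem : ⁅u, a⁆ ∈ A := A.mul_mem (hu a ha) (A.inv_mem ha)
  refine ⟨⁅u, a⁆, hmem, h, mul_inv_eq_iff_eq_mul.mp ?_⟩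
  -- The commutator is `a ^ u * a`, and `u` swaps `a ^ u` and `a`.
  calc u * ⁅u, a⁆ * u⁻¹ = u * ⁅u, a⁆⁻¹ * u⁻¹ := by rw [hinv hmem]
    _ = u * a * u⁻¹ * (u * u * a * (u * u)⁻¹)⁻¹ := by rw [commutatorElement_def]; group
    _ = ⁅u, a⁆ := by rw [mul_inv_eq_iff_eq_mul.mpr (huu a ha).eq, commutatorElement_def]

variable {i j t : G} (hi : i * i = t) (hj : j * j = t) (ht : t * t = 1) (hij : i * j = t * (j * i))

include hi hj ht hij

theorem exists_ne_one_commute_of_quaternion {A : Subgroup G} (hA : ∀ x ∈ A, x * x = 1)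
    (hne : ∃ x ∈ A, x ≠ 1) (hAi : ∀ x ∈ A, i * x * i⁻¹ ∈ A) (hAj : ∀ x ∈ A, j * x * j⁻¹ ∈ A) :
    ∃ x ∈ A, x ≠ 1 ∧ Commute i x ∧ Commute j x := by
  have hit : Commute i t := hi ▸ (Commute.refl i).mul_right (Commute.refl i)
  have hjt : Commute j t := hj ▸ (Commute.refl j).mul_right (Commute.refl j)
  have conj_mem {u c x : G} (hu : Commute u c) (hx : x ∈ Subgroup.centralizer {c}) :
      u * x * u⁻¹ ∈ Subgroup.centralizer {c} := by
    have huc : u ∈ Subgroup.centralizer {c} := Subgroup.mem_centralizer_singleton_iff.mpr hu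
    exact mul_mem (mul_mem huc hx) (inv_mem huc)
  have hAt : ∀ x ∈ A, t * x * t⁻¹ ∈ A := fun x hx => by
    have := hAi _ (hAi x hx)
    rwa [show i * (i * x * i⁻¹) * i⁻¹ = t * x * t⁻¹ by rw [← hi]; group] at this
  obtain ⟨a, haA, ha1, hat⟩ := exists_ne_one_commute hA hne hAt fun x _ =>
    ht ▸ Commute.one_left x
  obtain ⟨b, hb, hb1, hbi⟩ := exists_ne_one_commute (A := A ⊓ Subgroup.centralizer {t}) (u := i)
    (fun x hx => hA x hx.1) ⟨a, ⟨haA, Subgroup.mem_centralizer_singleton_iff.mpr hat.symm⟩, ha1⟩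
    (fun x hx => ⟨hAi x hx.1, conj_mem hit hx.2⟩)
    fun x hx => hi ▸ (Subgroup.mem_centralizer_singleton_iff.mp hx.2).symm
  have hconj : ∀ x ∈ A ⊓ Subgroup.centralizer {t} ⊓ Subgroup.centralizer {i},
      j * x * j⁻¹ ∈ Subgroup.centralizer {i} := by
    intro x hx
    have hxt : Commute t (j * x * j⁻¹) :=
      (Subgroup.mem_centralizer_singleton_iff.mp (conj_mem hjt hx.1.2)).symm
    have hxi : i * x * i⁻¹ = x :=
      mul_inv_eq_iff_eq_mul.mpr (Subgroup.mem_centralizer_singleton_iff.mp hx.2).symm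
    refine Subgroup.mem_centralizer_singleton_iff.mpr (mul_inv_eq_iff_eq_mul.mp ?_).symm
    calc i * (j * x * j⁻¹) * i⁻¹ = i * j * x * (i * j)⁻¹ := by group
      _ = t * (j * (i * x * i⁻¹) * j⁻¹) * t⁻¹ := by rw [hij]; group
      _ = j * x * j⁻¹ := by rw [hxi, mul_inv_eq_iff_eq_mul.mpr hxt.eq]
  obtain ⟨c, hc, hc1, hcj⟩ := exists_ne_one_commute (u := j)
    (A := A ⊓ Subgroup.centralizer {t} ⊓ Subgroup.centralizer {i}) (fun x hx => hA x hx.1.1)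
    ⟨b, ⟨hb, Subgroup.mem_centralizer_singleton_iff.mpr hbi.symm⟩, hb1⟩
    (fun x hx => ⟨⟨hAj x hx.1.1, conj_mem hjt hx.1.2⟩, hconj x hx⟩)
    fun x hx => hj ▸ (Subgroup.mem_centralizer_singleton_iff.mp hx.1.2).symm
  exact ⟨c, hc.1.1, hc1, (Subgroup.mem_centralizer_singleton_iff.mp hc.2).symm, hcj⟩

theorem exists_notMem_commutator_mem_of_quaternion (N : Subgroup G) [N.Normal] {A : Subgroup G}
    (hA : ∀ x ∈ A, x * x ∈ N) (hAN : ¬ A ≤ N) (hAi : ∀ x ∈ A, i * x * i⁻¹ ∈ A)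
    (hAj : ∀ x ∈ A, j * x * j⁻¹ ∈ A) : ∃ x ∈ A, x ∉ N ∧ ⁅i, x⁆ ∈ N ∧ ⁅j, x⁆ ∈ N := by
  obtain ⟨a, ha, haN⟩ := SetLike.not_le_iff_exists.mp hAN
  obtain ⟨_, ⟨x, hx, rfl⟩, hx1, hxi, hxj⟩ := exists_ne_one_commute_of_quaternion
    (i := (i : G ⧸ N)) (j := (j : G ⧸ N)) (t := (t : G ⧸ N)) (congrArg _ hi) (congrArg _ hj)
    (congrArg _ ht) (congrArg _ hij) (A := A.map (QuotientGroup.mk' N))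
    (by rintro _ ⟨x, hx, rfl⟩; exact (QuotientGroup.eq_one_iff _).mpr (hA x hx))
    ⟨a, ⟨a, ha, rfl⟩, fun h => haN ((QuotientGroup.eq_one_iff a).mp h)⟩
    (by rintro _ ⟨x, hx, rfl⟩; exact ⟨_, hAi x hx, rfl⟩)
    (by rintro _ ⟨x, hx, rfl⟩; exact ⟨_, hAj x hx, rfl⟩)
  exact ⟨x, hx, fun h => hx1 ((QuotientGroup.eq_one_iff x).mpr h),
    (QuotientGroup.eq_one_iff _).mp (commutatorElement_eq_one_iff_commute.mpr hxi),
    (QuotientGroup.eq_one_iff _).mp (commutatorElement_eq_one_iff_commute.mpr hxj)⟩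

end SolvableGroups

section LastDerived

variable {G : Type*} [Group G]

theorem exists_normal_not_le_center [hG : Group.IsSolvable G] (hab : Subgroup.center G ≠ ⊤) :
    ∃ M : Subgroup G, M.Normal ∧ ¬ M ≤ Subgroup.center G ∧ ⁅M, M⁆ ≤ Subgroup.center G := by
  classical
  have hex : ∃ n, derivedSeries G n ≤ Subgroup.center G :=
    hG.solvable.imp fun n hn => le_of_eq_of_le hn bot_le
  obtain ⟨k, hk⟩ : ∃ k, Nat.find hex = k + 1 := by
    refine Nat.exists_eq_add_one_of_ne_zero fun h => hab (top_le_iff.mp ?_)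
    exact (Nat.find_eq_zero hex).mp h
  have hk1 : derivedSeries G (k + 1) ≤ Subgroup.center G := hk ▸ Nat.find_spec hex
  exact ⟨derivedSeries G k, derivedSeries_normal G k, Nat.find_min hex (by omega), hk1⟩

theorem mul_self_mem_center (hcenter : ∀ c ∈ Subgroup.center G, c * c = 1)
    (hab : ∀ A : Subgroup G, A.Normal → (∀ x ∈ A, ∀ y ∈ A, Commute x y) → A ≤ Subgroup.center G)
    {M : Subgroup G} (hM : M.Normal) (hMM : ⁅M, M⁆ ≤ Subgroup.center G) {m : G} (hm : m ∈ M) :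
    m * m ∈ Subgroup.center G := by
  refine hab (M ⊓ Subgroup.centralizer M) inferInstance
    (fun x hx y hy => (Subgroup.mem_centralizer_iff.mp hx.2 y hy.1).symm)
    ⟨mul_mem hm hm, Subgroup.mem_centralizer_iff.mpr fun y hy => ?_⟩
  obtain ⟨c, hc, hym⟩ : ∃ c ∈ Subgroup.center G, y * m = c * (m * y) :=
    ⟨⁅y, m⁆, hMM (Subgroup.commutator_mem_commutator hy hm), by
      rw [commutatorElement_def]; group⟩
  have hcm : m * c = c * m := Subgroup.mem_center_iff.mp hc m
  calc y * (m * m) = y * m * m := (mul_assoc ..).symm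
    _ = c * (m * y) * m := by rw [hym]
    _ = c * m * (y * m) := by simp only [mul_assoc]
    _ = c * (m * c) * (m * y) := by rw [hym]; simp only [mul_assoc]
    _ = c * c * (m * m * y) := by rw [hcm]; simp only [mul_assoc]
    _ = m * m * y := by rw [hcenter c hc, one_mul]

end LastDerived

namespace QuaternionPlane

variable {F V : Type*} [Field F] [AddCommGroup V] [Module F V] {B : LinearMap.BilinForm F V}

/-- `M` is a normal subgroup of the group generated by two quaternion planes which is extraspecial
in the weak sense that it is noncentral and that its commutators and squares lie in `{1, z}`, where
`z` is a central involution acting as `-1` on both planes. -/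
structure IsExtraspecialSection (Q Q' : QuaternionPlane B) (M : Subgroup (V ≃ₗ[F] V))
    (z : V ≃ₗ[F] V) : Prop where
  le_join : M ≤ join Q Q'
  conj_mem : ∀ y ∈ join Q Q', ∀ m ∈ M, y * m * y⁻¹ ∈ M
  z_mem : z ∈ M
  commute_z : ∀ y ∈ join Q Q', Commute z y
  z_mul_z : z * z = 1
  z_apply : ∀ x ∈ Q.plane, z x = -x
  z_apply' : ∀ x ∈ Q'.plane, z x = -x
  mul_eq : ∀ x ∈ M, ∀ y ∈ M, x * y = y * x ∨ x * y = z * (y * x)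
  mul_self : ∀ m ∈ M, m * m = 1 ∨ m * m = z
  exists_ne : ∃ m ∈ M, m ≠ 1 ∧ m ≠ z

section Existence

variable [NeZero (2 : F)] {Q Q' : QuaternionPlane B}

theorem exists_center_join (hQ : ¬ Commute Q.t Q'.t) (hord : ∀ y ∈ join Q Q', (orderOf y : F) ≠ 0)
    (hc : Subgroup.center (join Q Q') ≠ ⊥) : ∃ z, (∀ y ∈ join Q Q', Commute z y) ∧
      z * z = 1 ∧ (∀ x ∈ Q.plane, z x = -x) ∧ (∀ x ∈ Q'.plane, z x = -x) ∧
      ∀ y ∈ Subgroup.center (join Q Q'), (y : V ≃ₗ[F] V) = 1 ∨ (y : V ≃ₗ[F] V) = z := by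
  have eq_neg {n : join Q Q'} (hn : n ∈ Subgroup.center (join Q Q')) :=
    eq_one_or_eq_neg_of_central hQ n.2 (hord _ n.2) fun y hy =>
      (congrArg Subtype.val (Subgroup.mem_center_iff.mp hn ⟨y, hy⟩)).symm
  have mul_eq_one {n m : V ≃ₗ[F] V} (hn : n ∈ join Q Q') (hm : m ∈ join Q Q')
      (h : (∀ x ∈ Q.plane, n x = -x) ∧ ∀ x ∈ Q'.plane, n x = -x)
      (h' : (∀ x ∈ Q.plane, m x = -x) ∧ ∀ x ∈ Q'.plane, m x = -x) : n * m = 1 := by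
    have hnm := mul_mem hn hm
    refine eq_one_of_mem_join hnm (hord _ hnm) (fun x hx => ?_) fun x hx => ?_
    · rw [LinearEquiv.mul_apply, h'.1 x hx, map_neg, h.1 x hx, neg_neg]
    · rw [LinearEquiv.mul_apply, h'.2 x hx, map_neg, h.2 x hx, neg_neg]
  obtain ⟨⟨z, hz⟩, hz1⟩ := Subgroup.ne_bot_iff_exists_ne_one.mp hc
  have hzneg := (eq_neg hz).resolve_left fun h => hz1 (Subtype.ext (Subtype.ext h))
  have hzz := mul_eq_one z.2 z.2 hzneg hzneg
  refine ⟨z, fun y hy => (congrArg Subtype.val (Subgroup.mem_center_iff.mp hz ⟨y, hy⟩)).symm,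
    hzz, hzneg.1, hzneg.2, fun y hy => (eq_neg hy).imp_right fun h => ?_⟩
  exact mul_right_cancel ((mul_eq_one y.2 z.2 h hzneg).trans hzz.symm)

theorem le_center_join_of_normal (hQ : ¬ Commute Q.t Q'.t)
    (hord : ∀ y ∈ join Q Q', (orderOf y : F) ≠ 0) (A : Subgroup (join Q Q')) (hA : A.Normal)
    (hcomm : ∀ x ∈ A, ∀ y ∈ A, Commute x y) : A ≤ Subgroup.center (join Q Q') := by
  intro n hn
  refine Subgroup.mem_center_iff.mpr fun y => Subtype.ext (commute_of_mem_normalized hQ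
    (N := A.map (join Q Q').subtype) ?_ ?_ ?_ ?_ ⟨n, hn, rfl⟩ y.2).eq.symm
  · rintro _ ⟨x, hx, rfl⟩ _ ⟨y, hy, rfl⟩
    exact (hcomm x hx y hy).map (join Q Q').subtype
  · simpa [A.normalizer_eq_top, ← MonoidHom.range_eq_map] using
      A.le_normalizer_map (join Q Q').subtype
  · rintro _ ⟨x, -, rfl⟩
    exact join_le_formIsometries Q Q' x.2
  · rintro _ ⟨x, -, rfl⟩
    exact hord _ x.2

theorem exists_isExtraspecialSection (hQ : ¬ Commute Q.t Q'.t)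
    (hord : ∀ y ∈ join Q Q', (orderOf y : F) ≠ 0) [Group.IsSolvable (join Q Q')] :
    ∃ M z, IsExtraspecialSection Q Q' M z := by
  have hcomm {n : join Q Q'} (hn : n ∈ Subgroup.center (join Q Q')) (y : join Q Q') : Commute n y :=
    (Subgroup.mem_center_iff.mp hn y).symm
  obtain ⟨M, hM, hMc, hMM⟩ := exists_normal_not_le_center (G := join Q Q') fun h => hQ <|
    congrArg Subtype.val (hcomm (n := ⟨Q.t, t_mem_join Q Q'⟩) (h ▸ trivial) ⟨_, t_mem_join' Q Q'⟩)
  have habel := le_center_join_of_normal hQ hord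
  obtain ⟨x, hx, y, hy, hxy⟩ : ∃ x ∈ M, ∃ y ∈ M, ¬ Commute x y := by
    by_contra! h
    exact hMc (habel M hM h)
  have hc {x y : join Q Q'} (hx : x ∈ M) (hy : y ∈ M) : ⁅x, y⁆ ∈ Subgroup.center (join Q Q') :=
    hMM (Subgroup.commutator_mem_commutator hx hy)
  have hc1 : ⁅x, y⁆ ≠ 1 := fun h => hxy (commutatorElement_eq_one_iff_commute.mp h)
  obtain ⟨z, hzc, hzz, hzQ, hzQ', hcenter⟩ := exists_center_join hQ hord
    (Subgroup.ne_bot_iff_exists_ne_one.mpr ⟨⟨_, hc hx hy⟩, fun h => hc1 (congrArg Subtype.val h)⟩)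
  have hxyz : ((⁅x, y⁆ : join Q Q') : V ≃ₗ[F] V) = z :=
    (hcenter _ (hc hx hy)).resolve_left fun h => hc1 (Subtype.ext h)
  refine ⟨M.map (join Q Q').subtype, z, Subgroup.map_subtype_le M, ?_, ?_, hzc, hzz, hzQ, hzQ', ?_,
    ?_, ⟨x, ⟨x, hx, rfl⟩, ?_, ?_⟩⟩
  · rintro y hy _ ⟨m, hm, rfl⟩
    exact ⟨_, hM.conj_mem m hm ⟨y, hy⟩, rfl⟩
  · rw [← hxyz]
    exact ⟨_, mul_mem (hM.conj_mem y hy x) (inv_mem hy), rfl⟩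
  · rintro _ ⟨x, hx, rfl⟩ _ ⟨y, hy, rfl⟩
    have hmul : ((x * y : join Q Q') : V ≃ₗ[F] V) = (⁅x, y⁆ : join Q Q') * (y * x) := by
      simp [commutatorElement_def, mul_assoc]
    refine (hcenter _ (hc hx hy)).imp (fun h => ?_) fun h => ?_
    · exact congrArg Subtype.val (commutatorElement_eq_one_iff_commute.mp (Subtype.ext h)).eq
    · rwa [h] at hmul
  · rintro _ ⟨m, hm, rfl⟩
    refine hcenter (m * m) (mul_self_mem_center (fun c hc => Subtype.ext ?_) habel hM hMM hm)
    rcases hcenter c hc with h | h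
    · simp [h]
    · simpa [h] using hzz
  · intro h
    obtain rfl : x = 1 := Subtype.ext h
    exact hxy (Commute.one_left y)
  · rintro rfl
    exact hxy (Subtype.ext (hzc y y.2).eq)

end Existence

end QuaternionPlane

namespace QuaternionPlane.IsExtraspecialSection

variable {F V : Type*} [Field F] [AddCommGroup V] [Module F V] {B : LinearMap.BilinForm F V}
  {Q Q' : QuaternionPlane B} {M : Subgroup (V ≃ₗ[F] V)} {z : V ≃ₗ[F] V}

theorem symm (h : IsExtraspecialSection Q Q' M z) : IsExtraspecialSection Q' Q M z where
  le_join := join_comm Q Q' ▸ h.le_join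
  conj_mem := join_comm Q Q' ▸ h.conj_mem
  z_mem := h.z_mem
  commute_z := join_comm Q Q' ▸ h.commute_z
  z_mul_z := h.z_mul_z
  z_apply := h.z_apply'
  z_apply' := h.z_apply
  mul_eq := h.mul_eq
  mul_self := h.mul_self
  exists_ne := h.exists_ne

theorem exists_add_t_apply_ne_zero (hQ : ¬ Commute Q.t Q'.t) : ∃ y ∈ Q'.plane, y + Q.t y ≠ 0 := by
  by_contra! hcon
  refine hQ (Q'.commute_t_of_mapsTo Q.t_mem_formIsometries fun y hy => ?_)
  rw [← neg_eq_of_add_eq_zero_right (hcon y hy)]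
  exact neg_mem hy

variable (h : IsExtraspecialSection Q Q' M z)

include h

theorem apply_z {y : V ≃ₗ[F] V} (hy : y ∈ join Q Q') {x : V} (hx : z x = -x) : z (y x) = -y x := by
  rw [apply_comm_of_commute (h.commute_z y hy), hx, map_neg]

theorem mem_formIsometries {m : V ≃ₗ[F] V} (hm : m ∈ M) : m ∈ formIsometries B :=
  join_le_formIsometries Q Q' (h.le_join hm)

theorem add_t_apply {y : V} (hy : y ∈ Q'.plane) :
    Q.t (y + Q.t y) = y + Q.t y ∧ z (y + Q.t y) = -(y + Q.t y) := by
  have htt : Q.t (Q.t y) = y := LinearEquiv.congr_fun Q.t_mul_t y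
  refine ⟨by rw [map_add, htt, add_comm], ?_⟩
  rw [map_add, h.z_apply' y hy, h.apply_z (t_mem_join Q Q') (h.z_apply' y hy), neg_add]

theorem exists_commute_up_to_z :
    ∃ m ∈ M, m ≠ 1 ∧ m ≠ z ∧ (⁅Q.i, m⁆ = 1 ∨ ⁅Q.i, m⁆ = z) ∧ (⁅Q.j, m⁆ = 1 ∨ ⁅Q.j, m⁆ = z) := by
  let zY : join Q Q' := ⟨z, h.le_join h.z_mem⟩
  have mem_iff {x : join Q Q'} :
      x ∈ Subgroup.zpowers zY ↔ (x : V ≃ₗ[F] V) = 1 ∨ (x : V ≃ₗ[F] V) = z := by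
    rw [mem_zpowers_iff_of_mul_self (Subtype.ext h.z_mul_z)]
    exact or_congr Subtype.ext_iff Subtype.ext_iff
  have : (Subgroup.zpowers zY).Normal := by
    refine ⟨fun n hn y => ?_⟩
    have hc : Commute y zY := Subtype.ext (h.commute_z y y.2).eq.symm
    obtain ⟨k, rfl⟩ := hn
    rw [(hc.zpow_right k).mul_inv_cancel]
    exact Subgroup.zpow_mem_zpowers zY k
  obtain ⟨m, hm, hm1, hmz⟩ := h.exists_ne
  obtain ⟨x, hx, hxN, hxi, hxj⟩ := exists_notMem_commutator_mem_of_quaternion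
    (i := (⟨Q.i, i_mem_join Q Q'⟩ : join Q Q')) (j := ⟨Q.j, j_mem_join Q Q'⟩)
    (t := ⟨Q.t, t_mem_join Q Q'⟩) (Subtype.ext Q.i_mul_i) (Subtype.ext Q.j_mul_j)
    (Subtype.ext Q.t_mul_t) (Subtype.ext Q.i_mul_j) (Subgroup.zpowers zY)
    (A := M.subgroupOf (join Q Q')) (fun x hx => mem_iff.mpr (h.mul_self x hx))
    (fun hle => (mem_iff.mp (@hle ⟨m, h.le_join hm⟩ hm)).elim hm1 hmz)
    (fun x hx => h.conj_mem Q.i (i_mem_join Q Q') x hx)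
    (fun x hx => h.conj_mem Q.j (j_mem_join Q Q') x hx)
  rw [mem_iff, not_or] at hxN
  exact ⟨x, hx, hxN.1, hxN.2, mem_iff.mp hxi, mem_iff.mp hxj⟩

variable [NeZero (2 : F)]

theorem commute_of_apply_eq {x y : V ≃ₗ[F] V} (hy : y ∈ join Q Q') (hx : x ∈ join Q Q')
    (hxy : x * y = y * x ∨ x * y = z * (y * x)) {p : V} (hp : p ≠ 0) (hzp : z p = -p)
    (hp' : x (y p) = y (x p)) : Commute x y := by
  refine hxy.resolve_right fun hmul => hp ?_
  have e : x (y p) = z (y (x p)) := LinearEquiv.congr_fun hmul p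
  rw [h.apply_z hy (h.apply_z hx hzp), hp'] at e
  exact (x.trans y).map_eq_zero_iff.mp (eq_zero_of_eq_neg_self (F := F) e)

theorem eq_zero_of_apply {y : V} (hty : Q.t y = y) (hzy : z y = -y)
    (hw : B (Q'.w + Q.t Q'.w) y = 0) (hv : B (Q'.v + Q.t Q'.v) y = 0) : y = 0 := by
  have double (x : V) : B (x + Q.t x) y = 2 * B x y := by
    have := Q.t_mem_formIsometries x y
    rw [hty] at this
    rw [map_add, LinearMap.add_apply, this, two_mul]
  have hcoord : Q'.coord y = 0 := by
    rw [double, mul_eq_zero_iff_left two_ne_zero] at hw hv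
    exact Q'.coord_eq_zero_iff.mpr ⟨hw, hv⟩
  have hz := apply_eq_self_of_mem_join (h.le_join h.z_mem) hty
    (Q'.coord_eq_zero_iff_t_apply.mp hcoord)
  exact eq_zero_of_eq_neg_self (F := F) (hz.symm.trans hzy)

/-- The image of `Q'.plane` under `1 + Q.t`, i.e. the common eigenspace of `Q.t` and `z` for the
eigenvalues `1` and `-1`; together with `Q.plane` it spans the sum of the two planes. -/
noncomputable def complementPlane (hQ : ¬ Commute Q.t Q'.t) : HyperbolicPair B where
  isAlt := Q.isAlt
  w := Q'.w + Q.t Q'.w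
  v := Q'.v + Q.t Q'.v
  form_ne_zero h0 := by
    obtain ⟨hwt, hwz⟩ := h.add_t_apply Q'.w_mem_plane
    obtain ⟨hvt, hvz⟩ := h.add_t_apply Q'.v_mem_plane
    have hw := h.eq_zero_of_apply hwt hwz (Q.isAlt _) (by rw [← Q.isAlt.neg_eq, h0, neg_zero])
    have hv := h.eq_zero_of_apply hvt hvz h0 (Q.isAlt _)
    obtain ⟨y, hy, hy0⟩ := exists_add_t_apply_ne_zero hQ
    obtain ⟨c, rfl⟩ := Q'.mem_plane_iff.mp hy
    refine hy0 ?_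
    rw [Q'.embed_apply, map_add, map_smul, map_smul]
    linear_combination (norm := module) c 0 • hw + c 1 • hv

theorem mem_complementPlane_iff (hQ : ¬ Commute Q.t Q'.t) {x : V} :
    x ∈ (h.complementPlane hQ).plane ↔ Q.t x = x ∧ z x = -x := by
  have of_mem {x} (hx : x ∈ (h.complementPlane hQ).plane) : Q.t x = x ∧ z x = -x := by
    obtain ⟨c, rfl⟩ := HyperbolicPair.mem_plane_iff _ |>.mp hx
    obtain ⟨hwt, hwz⟩ := h.add_t_apply Q'.w_mem_plane
    obtain ⟨hvt, hvz⟩ := h.add_t_apply Q'.v_mem_plane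
    simp only [HyperbolicPair.embed_apply, complementPlane, map_add, map_smul] at *
    exact ⟨by rw [hwt, hvt], by rw [hwz, hvz]; module⟩
  refine ⟨of_mem, fun ⟨hxt, hxz⟩ => ?_⟩
  obtain ⟨y, hy, c, rfl, hc⟩ := (h.complementPlane hQ).exists_eq_add_of_mem_plane x
  obtain ⟨hyt, hyz⟩ := of_mem hy
  obtain ⟨hcw, hcv⟩ := (h.complementPlane hQ).coord_eq_zero_iff.mp hc
  rw [map_add] at hxt hxz
  have hct : Q.t c = c := by linear_combination (norm := module) hxt - hyt
  have hcz : z c = -c := by linear_combination (norm := module) hxz - hyz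
  rwa [h.eq_zero_of_apply hct hcz hcw hcv, add_zero]

theorem eq_one_of_apply (hQ : ¬ Commute Q.t Q'.t) {n : V ≃ₗ[F] V} (hn : n ∈ join Q Q')
    (hord : (orderOf n : F) ≠ 0) (hfix : ∀ x ∈ Q.plane, n x = x)
    (hfix' : ∀ x ∈ (h.complementPlane hQ).plane, n x = x) : n = 1 := by
  refine eq_one_of_mem_join hn hord hfix fun y hy => ?_
  have htt : Q.t (Q.t y) = y := LinearEquiv.congr_fun Q.t_mul_t y
  have hadd := hfix' _ ((h.mem_complementPlane_iff hQ).mpr (h.add_t_apply hy))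
  have hsub := hfix (y - Q.t y) (Q.mem_plane_iff_t_apply.mpr (by rw [map_sub, htt, neg_sub]))
  rw [map_add] at hadd
  rw [map_sub] at hsub
  have : (2 : F) • (n y - y) = 0 := by linear_combination (norm := module) hadd + hsub
  exact sub_eq_zero.mp ((smul_eq_zero.mp this).resolve_left two_ne_zero)

theorem exists_commute_i_and_j (hQ : ¬ Commute Q.t Q'.t) :
    ∃ m ∈ M, m ≠ 1 ∧ m ≠ z ∧ Commute Q.i m ∧ Commute Q.j m := by
  obtain ⟨m, hm, hm1, hmz, hi, hj⟩ := h.exists_commute_up_to_z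
  have hmY := h.le_join hm
  obtain ⟨y, hy, hne⟩ := exists_add_t_apply_ne_zero hQ
  obtain ⟨hyt, hyz⟩ := h.add_t_apply hy
  have eq_or {u : V ≃ₗ[F] V} (hu : ⁅u, m⁆ = 1 ∨ ⁅u, m⁆ = z) :
      u * m = m * u ∨ u * m = z * (m * u) := by
    have hum : u * m = ⁅u, m⁆ * (m * u) := by rw [commutatorElement_def]; group
    exact hu.imp (fun e => by rw [hum, e, one_mul]) fun e => by rw [hum, e]
  have ht : Commute Q.t m := by
    rcases eq_or hi with e | e
    · exact Q.i_mul_i ▸ (show Commute Q.i m from e).mul_left e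
    · have hzi := (h.commute_z _ (i_mem_join Q Q')).eq
      rw [Commute, SemiconjBy, ← Q.i_mul_i]
      calc Q.i * Q.i * m = Q.i * z * (m * Q.i) := by rw [mul_assoc, e, mul_assoc]
        _ = z * (Q.i * m) * Q.i := by rw [← hzi]; simp only [mul_assoc]
        _ = z * z * (m * (Q.i * Q.i)) := by rw [e]; simp only [mul_assoc]
        _ = m * (Q.i * Q.i) := by rw [h.z_mul_z, one_mul]
  -- A quarter turn `u` fixes `y + t y` and its image under `m`.
  have comm {u : V ≃ₗ[F] V} (huY : u ∈ join Q Q') (hu : IsQuarterTurn Q.t u)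
      (hum : ⁅u, m⁆ = 1 ∨ ⁅u, m⁆ = z) : Commute u m :=
    h.commute_of_apply_eq hmY huY (eq_or hum) hne hyz (by
      rw [hu.apply_of_fixed _ hyt,
        hu.apply_of_fixed _ (apply_eq_self_of_commute ht.symm hyt)])
  exact ⟨m, hm, hm1, hmz, comm (i_mem_join Q Q') Q.isQuarterTurn_i hi,
    comm (j_mem_join Q Q') Q.isQuarterTurn_j hj⟩

theorem exists_apply_eq_self (hQ : ¬ Commute Q.t Q'.t) :
    ∃ m ∈ M, m ≠ 1 ∧ Commute Q.t m ∧ ∀ x ∈ Q.plane, m x = x := by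
  obtain ⟨m, hm, hm1, hmz, hi, hj⟩ := h.exists_commute_i_and_j hQ
  have ht : Commute Q.t m := Q.i_mul_i ▸ hi.mul_left hi
  rcases Q.eq_self_or_eq_neg_of_commute (h.mem_formIsometries hm) hi.symm hj.symm with hs | hs
  · exact ⟨m, hm, hm1, ht, hs⟩
  · refine ⟨m * z, mul_mem hm h.z_mem, fun hmz1 => hmz ?_,
      ht.mul_right (h.commute_z _ (t_mem_join Q Q')).symm, fun x hx => ?_⟩
    · exact mul_right_cancel (hmz1.trans h.z_mul_z.symm)
    · rw [LinearEquiv.mul_apply, h.z_apply x hx, map_neg, hs x hx, neg_neg]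

theorem t_mem (hQ : ¬ Commute Q.t Q'.t) (hord : ∀ y ∈ join Q Q', (orderOf y : F) ≠ 0) :
    Q.t ∈ M := by
  obtain ⟨m, hm, hm1, hmt, hmQ⟩ := h.exists_apply_eq_self hQ
  have hmY := h.le_join hm
  have hmm : m * m = 1 := by
    refine (h.mul_self m hm).resolve_right fun hz => Q.w_ne_zero ?_
    have e : m (m Q.w) = z Q.w := LinearEquiv.congr_fun hz Q.w
    rw [hmQ _ Q.w_mem_plane, hmQ _ Q.w_mem_plane, h.z_apply _ Q.w_mem_plane] at e
    exact eq_zero_of_eq_neg_self (F := F) e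
  have hiff {x} := h.mem_complementPlane_iff hQ (x := x)
  rcases (h.complementPlane hQ).eq_self_or_eq_neg_of_apply_apply (h.mem_formIsometries hm)
    (fun x hx => hiff.mpr ⟨apply_eq_self_of_commute hmt.symm (hiff.mp hx).1,
      h.apply_z hmY (hiff.mp hx).2⟩) (fun x _ => LinearEquiv.congr_fun hmm x) with hs | hs
  · exact absurd (h.eq_one_of_apply hQ hmY (hord m hmY) hmQ hs) hm1
  have hmem : m * (Q.t * z) ∈ join Q Q' :=
    mul_mem hmY (mul_mem (t_mem_join Q Q') (h.le_join h.z_mem))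
  have hone : m * (Q.t * z) = 1 := by
    refine h.eq_one_of_apply hQ hmem (hord _ hmem) (fun x hx => ?_) fun x hx => ?_
    · simp only [LinearEquiv.mul_apply]
      rw [h.z_apply x hx, map_neg, Q.t_apply_of_mem_plane hx, neg_neg, hmQ x hx]
    · simp only [LinearEquiv.mul_apply]
      rw [(hiff.mp hx).2, map_neg, (hiff.mp hx).1, map_neg, hs x hx, neg_neg]
  have ht : Q.t = m⁻¹ * z⁻¹ := eq_mul_inv_of_mul_eq (eq_inv_of_mul_eq_one_right hone)
  exact ht ▸ mul_mem (inv_mem hm) (inv_mem h.z_mem)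

end QuaternionPlane.IsExtraspecialSection

namespace IsQuarterTurn

variable {F V : Type*} [Field F] [AddCommGroup V] [Module F V] {t t' u v d : V ≃ₗ[F] V}

theorem apply_sub_self (ht : t * t = 1) (hu : IsQuarterTurn t u) (x : V) :
    t (u x - x) = -(u x - x) := by
  have hfix := hu.apply_of_fixed (x + t x) (by
    rw [map_add, add_comm]; exact congrArg (· + t x) (LinearEquiv.congr_fun ht x))
  rw [map_add] at hfix
  rw [map_sub, ← apply_comm_of_commute hu.commute]
  linear_combination (norm := module) hfix

theorem braid (ht : t * t = 1) (ht' : t' * t' = 1) (hu : IsQuarterTurn t u)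
    (hv : IsQuarterTurn t' v) (huv : ∀ y, t y = -y → u (v y) = v y - y)
    (hvu : ∀ y, t' y = -y → v (u y) = u y - y) : u * v * u = v * u * v := by
  ext x
  have hu' := huv _ (hu.apply_sub_self ht x)
  have hv' := hvu _ (hv.apply_sub_self ht' x)
  simp only [map_sub] at hu' hv'
  simp only [LinearEquiv.mul_apply]
  linear_combination (norm := module) hu' - hv'

theorem apply_apply_eq_sub [NeZero (2 : F)] (ht' : t' * t' = 1) (hu : IsQuarterTurn t u)
    (hv : IsQuarterTurn t' v) (hud : ∀ x, t x = -x → u x = d x)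
    (hvd : ∀ x, t' x = -x → v x = d x) (hdt : Commute d t)
    (htt' : ∀ x, t x = -x → t (t' x) = t' x) {y : V} (hy : t y = -y) : u (v y) = v y - y := by
  have ht'y : t' (t' y) = y := LinearEquiv.congr_fun ht' y
  have hdy : t (d y) = -d y := apply_eq_neg_of_commute hdt hy
  have hddy : d (d y) = -y := by
    rw [← hud _ hdy, ← hud y hy, ← hy]
    exact LinearEquiv.congr_fun hu.mul_self y
  have hsub := hvd (y - t' y) (by rw [map_sub, ht'y]; abel)
  have hadd := hv.apply_of_fixed (y + t' y) (by rw [map_add, ht'y]; abel)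
  rw [map_sub, map_sub] at hsub
  rw [map_add] at hadd
  have h2v : (2 : F) • v y = d y - d (t' y) + y + t' y := by
    linear_combination (norm := module) hsub + hadd
  have h2uv := congrArg u h2v
  rw [map_smul, map_add, map_add, map_sub, hud _ hdy, hddy, hud y hy,
    hu.apply_of_fixed _ (htt' y hy),
    hu.apply_of_fixed _ (apply_eq_self_of_commute hdt (htt' y hy))] at h2uv
  have : (2 : F) • (u (v y) - (v y - y)) = 0 := by linear_combination (norm := module) h2uv - h2v
  exact sub_eq_zero.mp ((smul_eq_zero.mp this).resolve_left two_ne_zero)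

end IsQuarterTurn

namespace QuaternionPlane

variable {F V : Type*} [Field F] [AddCommGroup V] [Module F V]
  {B : LinearMap.BilinForm F V} {Q Q' : QuaternionPlane B}

namespace IsExtraspecialSection

variable {M : Subgroup (V ≃ₗ[F] V)} {z : V ≃ₗ[F] V} (h : IsExtraspecialSection Q Q' M z)

include h

theorem exists_isQuarterTurn_of_apply_comm [NeZero (2 : F)] {d u : V ≃ₗ[F] V} (hd : d ∈ M)
    (hdplane : ∀ x ∈ Q.plane, d x ∈ Q.plane) (hu : u ∈ join Q Q') (hut : IsQuarterTurn Q.t u)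
    (hi : ∀ x ∈ Q.plane, u (d (Q.i x)) = Q.i (u (d x)))
    (hj : ∀ x ∈ Q.plane, u (d (Q.j x)) = Q.j (u (d x))) :
    ∃ u ∈ join Q Q', IsQuarterTurn Q.t u ∧ ∀ x ∈ Q.plane, u x = d x := by
  rcases Q.eq_self_or_eq_neg_of_apply_comm (g := u * d)
    (mul_mem (join_le_formIsometries Q Q' hu) (h.mem_formIsometries hd))
    (fun x hx => Q.mem_plane_of_commute_t hut.commute (hdplane x hx)) hi hj with hud | hud
  · exact ⟨u⁻¹, inv_mem hu, hut.inv Q.t_mul_t, fun x hx => u.symm_apply_eq.mpr (hud x hx).symm⟩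
  · refine ⟨u, hu, hut, fun x hx => ?_⟩
    have : u⁻¹ x = -d x := by
      rw [← neg_eq_iff_eq_neg, ← map_neg]
      exact u.symm_apply_eq.mpr (hud x hx).symm
    rw [hut.inv_apply_of_negated (Q.t_apply_of_mem_plane hx)] at this
    exact neg_injective this

variable (hQ : ¬ Commute Q.t Q'.t) (ht : Q.t ∈ M) (ht' : Q'.t ∈ M)

include hQ ht ht'

theorem t_t_apply {x : V} (hx : x ∈ Q.plane) : Q.t (Q'.t x) = Q'.t x := by
  have e : Q.t (Q'.t x) = z (Q'.t (Q.t x)) :=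
    LinearEquiv.congr_fun ((h.mul_eq _ ht _ ht').resolve_left hQ) x
  rw [e, Q.t_apply_of_mem_plane hx, map_neg, map_neg,
    h.apply_z (t_mem_join' Q Q') (h.z_apply x hx), neg_neg]

variable [NeZero (2 : F)]

theorem exists_lift {u : V ≃ₗ[F] V} (hu : u ∈ join Q Q') (hut : IsQuarterTurn Q.t u) :
    ∃ d ∈ M, (∀ x ∈ Q.plane, d x = u x) ∧ Commute d Q.t ∧ Commute d Q'.t := by
  have ht't' (x : V) : Q'.t (Q'.t x) = x := LinearEquiv.congr_fun Q'.t_mul_t x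
  have hmem : u * Q'.t * u * Q'.t ∈ M := by
    have : u * Q'.t * u * Q'.t = u * Q'.t * u⁻¹ * Q.t * Q'.t := by rw [← hut.mul_self]; group
    exact this ▸ mul_mem (mul_mem (h.conj_mem u hu _ ht') ht) ht'
  have hplane {x : V} (hx : x ∈ Q.plane) : (u * Q'.t * u * Q'.t) x = u x := by
    simp only [LinearEquiv.mul_apply]
    rw [hut.apply_of_fixed _ (h.t_t_apply hQ ht ht' hx), ht't']
  have hw := Q.w_mem_plane
  have huw : u Q.w ∈ Q.plane := Q.mem_plane_of_commute_t hut.commute hw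
  have comm {m : V ≃ₗ[F] V} (hm : m ∈ M) :=
    h.commute_of_apply_eq (h.le_join hm) (h.le_join hmem) (h.mul_eq _ hmem m hm) Q.w_ne_zero
      (h.z_apply _ hw)
  refine ⟨_, hmem, fun x => hplane, comm ht ?_, comm ht' ?_⟩
  · rw [Q.t_apply_of_mem_plane hw, map_neg, hplane hw, Q.t_apply_of_mem_plane huw]
  · rw [hplane hw]
    simp only [LinearEquiv.mul_apply]
    rw [ht't', hut.apply_of_fixed _ (h.t_t_apply hQ ht ht' huw)]

theorem apply_comm_or_anticomm {d u : V ≃ₗ[F] V} (hd : d ∈ M)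
    (hdplane : ∀ x ∈ Q.plane, d x ∈ Q.plane) (hu : u ∈ join Q Q') (hut : IsQuarterTurn Q.t u) :
    (∀ x ∈ Q.plane, d (u x) = u (d x)) ∨ ∀ x ∈ Q.plane, d (u x) = -u (d x) := by
  obtain ⟨e, he, heu, -, -⟩ := h.exists_lift hQ ht ht' hu hut
  refine (h.mul_eq d hd e he).imp (fun hde x hx => ?_) fun hde x hx => ?_ <;>
    have := LinearEquiv.congr_fun hde x <;>
    simp only [LinearEquiv.mul_apply] at this <;>
    rw [heu x hx, heu _ (hdplane x hx)] at this
  · exact this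
  · rw [this, h.z_apply _ (Q.mem_plane_of_commute_t hut.commute (hdplane x hx))]

theorem exists_isQuarterTurn_eq {d : V ≃ₗ[F] V} (hd : d ∈ M) (hdd : d * d = z)
    (hdt : Commute d Q.t) :
    ∃ u ∈ join Q Q', IsQuarterTurn Q.t u ∧ ∀ x ∈ Q.plane, u x = d x := by
  have hplane (x : V) (hx : x ∈ Q.plane) : d x ∈ Q.plane := Q.mem_plane_of_commute_t hdt hx
  have anti {x : V} (hx : x ∈ Q.plane) : Q.i (Q.j x) = -Q.j (Q.i x) :=
    (LinearEquiv.congr_fun Q.i_mul_j x).trans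
      (Q.t_apply_of_mem_plane (Q.j_apply_mem_plane (Q.i_apply_mem_plane hx)))
  have sign {u} := h.apply_comm_or_anticomm hQ ht ht' hd hplane (u := u)
  have of_comm {u} := h.exists_isQuarterTurn_of_apply_comm hd hplane (u := u)
  have hi := i_mem_join Q Q'
  have hj := j_mem_join Q Q'
  rcases sign hi Q.isQuarterTurn_i with hdi | hdi <;>
    rcases sign hj Q.isQuarterTurn_j with hdj | hdj
  · have hw := Q.w_mem_plane
    have hddw : d (d Q.w) = -Q.w := (LinearEquiv.congr_fun hdd Q.w).trans (h.z_apply _ hw)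
    refine absurd (eq_zero_of_eq_neg_self (F := F) (x := Q.w) ?_) Q.w_ne_zero
    rcases Q.eq_self_or_eq_neg_of_apply_comm (h.mem_formIsometries hd) hplane hdi hdj with hs | hs
    · rwa [hs _ hw, hs _ hw] at hddw
    · rwa [hs _ hw, map_neg, hs _ hw, neg_neg] at hddw
  · refine of_comm hi Q.isQuarterTurn_i (fun x hx => by rw [hdi x hx]) fun x hx => ?_
    rw [hdj x hx, map_neg, anti (hplane x hx), neg_neg]
  · refine of_comm hj Q.isQuarterTurn_j (fun x hx => ?_) fun x hx => by rw [hdj x hx]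
    rw [hdi x hx, map_neg, anti (hplane x hx)]
  · refine of_comm (mul_mem hi hj) Q.isQuarterTurn_i_mul_j (fun x hx => ?_) fun x hx => ?_ <;>
      simp only [LinearEquiv.mul_apply]
    · rw [hdi x hx, map_neg, map_neg, ← map_neg Q.i, anti (hplane x hx)]
    · rw [hdj x hx, map_neg, map_neg, anti (Q.j_apply_mem_plane (hplane x hx)), neg_neg]

theorem exists_braid :
    ∃ u ∈ join Q Q', IsQuarterTurn Q.t u ∧ u * Q'.i * u = Q'.i * u * Q'.i := by
  have hQ' : ¬ Commute Q'.t Q.t := fun hc => hQ hc.symm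
  obtain ⟨d, hd, hdi, hdt', hdt⟩ := h.symm.exists_lift hQ' ht' ht (i_mem_join Q' Q)
    Q'.isQuarterTurn_i
  have hdd : d * d = z := by
    refine (h.mul_self d hd).resolve_left fun hdd => Q'.w_ne_zero ?_
    have hw := Q'.w_mem_plane
    have e : d (d Q'.w) = Q'.w := LinearEquiv.congr_fun hdd Q'.w
    rw [hdi _ hw, hdi _ (Q'.i_apply_mem_plane hw), Q'.i_w, Q'.i_v] at e
    exact eq_zero_of_eq_neg_self (F := F) e.symm
  obtain ⟨u, huY, hu, hud⟩ := h.exists_isQuarterTurn_eq hQ ht ht' hd hdd hdt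
  have hv := Q'.isQuarterTurn_i
  simp only [HyperbolicPair.mem_plane_iff_t_apply] at hud hdi
  have hid x hx := (hdi x hx).symm
  refine ⟨u, huY, hu, hu.braid Q.t_mul_t Q'.t_mul_t hv (fun y => ?_) fun y => ?_⟩
  · exact hu.apply_apply_eq_sub Q'.t_mul_t hv hud hid hdt fun x hx =>
      h.t_t_apply hQ ht ht' (Q.mem_plane_iff_t_apply.mpr hx)
  · exact hv.apply_apply_eq_sub Q.t_mul_t hu hid hud hdt' fun x hx =>
      h.symm.t_t_apply hQ' ht' ht (Q'.mem_plane_iff_t_apply.mpr hx)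

end IsExtraspecialSection

theorem commute_t_t [NeZero (2 : F)] {H : Subgroup (V ≃ₗ[F] V)} [Group.IsSolvable H]
    (hord : ∀ g ∈ H, (orderOf g : F) ≠ 0) (h3 : ∀ g ∈ H, ¬ 3 ∣ orderOf g) (hi : Q.i ∈ H)
    (hj : Q.j ∈ H) (hi' : Q'.i ∈ H) (hj' : Q'.j ∈ H) : Commute Q.t Q'.t := by
  by_contra hQ
  have hle : join Q Q' ≤ H := (join_le Q Q').mpr ⟨⟨hi, hj⟩, hi', hj'⟩
  have : Group.IsSolvable (join Q Q') :=
    Group.isSolvable_of_isSolvable_injective (Subgroup.inclusion_injective hle)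
  have hord' (y) (hy : y ∈ join Q Q') := hord y (hle hy)
  obtain ⟨M, z, h⟩ := exists_isExtraspecialSection hQ hord'
  have ht := h.t_mem hQ hord'
  have ht' := h.symm.t_mem (fun hc => hQ hc.symm) (join_comm Q Q' ▸ hord')
  obtain ⟨u, huY, hu, hbraid⟩ := h.exists_braid hQ ht ht'
  refine hQ ?_
  rw [← hu.mul_self, ← Q'.i_mul_i, eq_of_braid hbraid (h3 _ (mul_mem (hle huY) hi'))]

end QuaternionPlane

namespace HyperbolicPair

variable {F V : Type*} [Field F] [AddCommGroup V] [Module F V] {B : LinearMap.BilinForm F V}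

/-- Two hyperbolic pairs are orthogonal if their planes are. -/
def IsOrtho (P P' : HyperbolicPair B) : Prop := ∀ x ∈ P'.plane, P.coord x = 0

theorem isOrtho_of_coord_eq_zero {P P' : HyperbolicPair B} (hw : P.coord P'.w = 0)
    (hv : P.coord P'.v = 0) : P.IsOrtho P' := by
  intro x hx
  obtain ⟨c, rfl⟩ := P'.mem_plane_iff.mp hx
  rw [embed_apply, map_add, map_smul, map_smul, hw, hv, smul_zero, smul_zero, add_zero]

theorem IsOrtho.form_eq_zero {P P' : HyperbolicPair B} (h : P.IsOrtho P') {x y : V}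
    (hx : x ∈ P.plane) (hy : y ∈ P'.plane) : B x y = 0 :=
  P.form_eq_zero_of_mem_plane hx (h y hy)

theorem IsOrtho.symm {P P' : HyperbolicPair B} (h : P.IsOrtho P') : P'.IsOrtho P := by
  have key {x y : V} (hx : x ∈ P'.plane) (hy : y ∈ P.plane) : B x y = 0 := by
    rw [← P.isAlt.neg_eq, h.form_eq_zero hy hx, neg_zero]
  exact fun y hy => P'.coord_eq_zero_iff.mpr ⟨key P'.w_mem_plane hy, key P'.v_mem_plane hy⟩

end HyperbolicPair

section Frame

variable {F V ι : Type*} [Field F] [AddCommGroup V] [Module F V] {B : LinearMap.BilinForm F V}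
  {P : ι → HyperbolicPair B}

open HyperbolicPair

theorem coord_sum_embed [Fintype ι] (hP : Pairwise fun l n => (P l).IsOrtho (P n))
    (c : ι → Fin 2 → F) (l : ι) : (P l).coord (∑ n, (P n).embed (c n)) = c l := by
  rw [map_sum, Fintype.sum_eq_single l, coord_embed]
  exact fun n hn => hP hn.symm _ ((P n).embed_mem_plane _)

theorem card_mul_two_le_finrank [Fintype ι] [FiniteDimensional F V]
    (hP : Pairwise fun l n => (P l).IsOrtho (P n)) :
    Fintype.card ι * 2 ≤ Module.finrank F V := by
  classical
  have hinj : Function.Injective (LinearMap.lsum F _ F fun n => (P n).embed) := by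
    intro c d h
    ext1 l
    have hl := congrArg (P l).coord h
    simpa [coord_sum_embed hP] using hl
  simpa [Module.finrank_pi_fintype] using LinearMap.finrank_le_finrank_of_injective hinj

variable (P) in
/-- A frame: a family of mutually orthogonal hyperbolic pairs spanning the space, the latter being
expressed by the absence of vectors orthogonal to all the planes. -/
structure IsFrame : Prop where
  isOrtho : Pairwise fun l n => (P l).IsOrtho (P n)
  eq_zero : ∀ x, (∀ l, (P l).coord x = 0) → x = 0

namespace IsFrame

theorem sum_embed_coord [Fintype ι] (hP : IsFrame P) (x : V) :
    ∑ l, (P l).embed ((P l).coord x) = x := by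
  refine (sub_eq_zero.mp (hP.eq_zero _ fun l => ?_)).symm
  rw [map_sub, coord_sum_embed hP.isOrtho, sub_self]

theorem finrank_le [Fintype ι] (hP : IsFrame P) : Module.finrank F V ≤ Fintype.card ι * 2 := by
  have hinj : Function.Injective (LinearMap.pi fun l => (P l).coord) := by
    rw [← LinearMap.ker_eq_bot, LinearMap.ker_eq_bot']
    exact fun x hx => hP.eq_zero x (congrFun hx)
  simpa [Module.finrank_pi_fintype] using LinearMap.finrank_le_finrank_of_injective hinj

theorem map (hP : IsFrame P) (g : V ≃ₗ[F] V) (hg : g ∈ formSimilitudes B) :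
    IsFrame fun l => (P l).map g hg where
  isOrtho l n hln := by
    refine isOrtho_of_coord_eq_zero ?_ ?_
    · exact ((P l).coord_map g hg _).trans (hP.isOrtho hln _ (P n).w_mem_plane)
    · exact ((P l).coord_map g hg _).trans (hP.isOrtho hln _ (P n).v_mem_plane)
  eq_zero x hx := by
    obtain ⟨y, rfl⟩ := g.surjective x
    rw [hP.eq_zero y fun l => by rw [← (P l).coord_map g hg, hx], map_zero]

end IsFrame

theorem pairwise_isOrtho_cons {k : ℕ} {P : Fin k → HyperbolicPair B} {P' : HyperbolicPair B}
    (hP : Pairwise fun l n => (P l).IsOrtho (P n)) (hP' : ∀ l, (P l).IsOrtho P') :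
    Pairwise fun l n => (Fin.cons P' P : Fin (k + 1) → HyperbolicPair B) l |>.IsOrtho
      ((Fin.cons P' P : Fin (k + 1) → HyperbolicPair B) n) := by
  intro l n hln
  cases l using Fin.cases <;> cases n using Fin.cases
  · exact absurd rfl hln
  · exact (hP' _).symm
  · exact hP' _
  · exact hP (ne_of_apply_ne Fin.succ hln)

theorem isFrame_of_maximal {k : ℕ} {P : Fin k → HyperbolicPair B} (halt : B.IsAlt)
    (hnd : LinearMap.SeparatingLeft B) (hP : Pairwise fun l n => (P l).IsOrtho (P n))
    (hmax : ∀ P' : Fin (k + 1) → HyperbolicPair B,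
      ¬ Pairwise fun l n => (P' l).IsOrtho (P' n)) : IsFrame P := by
  refine ⟨hP, fun x hx => ?_⟩
  by_contra hx0
  obtain ⟨y, hy⟩ : ∃ y, B x y ≠ 0 := by
    contrapose! hx0
    exact hnd x hx0
  set z := y - ∑ l, (P l).embed ((P l).coord y) with hz
  have hxz : B x z ≠ 0 := by
    rw [hz, map_sub, map_sum, Finset.sum_eq_zero, sub_zero]
    · exact hy
    · intro l _
      rw [← halt.neg_eq, (P l).form_embed_eq_zero (hx l), neg_zero]
  let P' : HyperbolicPair B := ⟨halt, x, z, hxz⟩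
  refine hmax (Fin.cons P' P) (pairwise_isOrtho_cons hP fun l => ?_)
  refine isOrtho_of_coord_eq_zero (hx l) ?_
  rw [map_sub, coord_sum_embed hP, sub_self]

theorem exists_isFrame [FiniteDimensional F V] (halt : B.IsAlt) (hnd : LinearMap.SeparatingLeft B) :
    ∃ (k : ℕ) (P : Fin k → HyperbolicPair B), IsFrame P := by
  classical
  let IsSize (k : ℕ) : Prop :=
    ∃ P : Fin k → HyperbolicPair B, Pairwise fun l n => (P l).IsOrtho (P n)
  have hbound {k : ℕ} : IsSize k → k ≤ Module.finrank F V := by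
    rintro ⟨P, hP⟩
    have h := card_mul_two_le_finrank hP
    rw [Fintype.card_fin] at h
    omega
  obtain ⟨P, hP⟩ : IsSize (Nat.findGreatest IsSize (Module.finrank F V)) :=
    Nat.findGreatest_spec (Nat.zero_le _) ⟨finZeroElim, Subsingleton.pairwise⟩
  refine ⟨_, P, isFrame_of_maximal halt hnd hP fun P' hP' => ?_⟩
  exact absurd (Nat.le_findGreatest (hbound ⟨P', hP'⟩) ⟨P', hP'⟩) (Nat.lt_irrefl _)

end Frame

section FixOrInvert

variable {G : Type*} [Group G]

/-- The subgroup of the elements whose conjugation action fixes or inverts `u`. -/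
def fixOrInvert (u : G) : Subgroup G where
  carrier := {g | MulAut.conj g u = u ∨ MulAut.conj g u = u⁻¹}
  one_mem' := .inl (by simp)
  mul_mem' := by
    rintro g h hg (hh | hh)
    · simpa only [Set.mem_ofPred_eq, map_mul, MulAut.mul_apply, hh] using hg
    · rw [Set.mem_ofPred_eq, map_mul, MulAut.mul_apply, hh, map_inv, _root_.inv_inj,
        inv_eq_iff_eq_inv]
      exact hg.symm
  inv_mem' := by
    rintro g (hg | hg)
    · refine .inl ?_
      rw [map_inv]
      exact (MulAut.conj g).symm_apply_eq.mpr hg.symm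
    · refine .inr ?_
      rw [map_inv]
      exact (MulAut.conj g).symm_apply_eq.mpr (by rw [map_inv, hg, inv_inv])

theorem mem_fixOrInvert_of_commute {g u : G} (h : Commute g u) : g ∈ fixOrInvert u :=
  .inl (mul_inv_eq_of_eq_mul h.eq)

theorem commute_mul_self_of_mem_fixOrInvert {g u : G} (h : g ∈ fixOrInvert u) :
    Commute (g * g) u := by
  refine mul_inv_eq_iff_eq_mul.mp (?_ : MulAut.conj (g * g) u = u)
  rw [map_mul, MulAut.mul_apply]
  rcases h with h | h
  · rw [h, h]
  · rw [h, map_inv, h, inv_inv]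

/-- A fixed point of `A` on the cosets of `H` in `K` provides the conjugating element. -/
theorem exists_conj_mem_of_isPGroup {p : ℕ} [Fact p.Prime] {A H K : Subgroup G}
    (hA : IsPGroup p A) (hAK : A ≤ K) (hp : ¬ p ∣ H.relIndex K) :
    ∃ g ∈ K, ∀ x ∈ A, g⁻¹ * x * g ∈ H := by
  have hA' : IsPGroup p (A.subgroupOf K) := hA.of_equiv (Subgroup.subgroupOfEquivOfLe hAK).symm
  obtain ⟨y, hy⟩ := hA'.nonempty_fixed_point_of_prime_not_dvd_card (K ⧸ H.subgroupOf K) hp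
  obtain ⟨g, rfl⟩ := QuotientGroup.mk_surjective y
  refine ⟨g, g.2, fun x hx => ?_⟩
  have hfix : ((⟨x, hAK hx⟩ * g : K) : K ⧸ H.subgroupOf K) = g := hy ⟨⟨x, hAK hx⟩, hx⟩
  have hmem : (g : G)⁻¹ * (x * g) ∈ H := QuotientGroup.eq (s := H.subgroupOf K).mp hfix.symm
  rwa [← mul_assoc] at hmem

end FixOrInvert

section QuaternionFrame

variable {F V ι : Type*} [Field F] [AddCommGroup V] [Module F V] {B : LinearMap.BilinForm F V}

theorem HyperbolicPair.IsOrtho.commute_slAction {P P' : HyperbolicPair B} (h : P.IsOrtho P')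
    (M N : Matrix.SpecialLinearGroup (Fin 2) F) : Commute (P.slAction M) (P'.slAction N) := by
  ext x
  simp only [LinearEquiv.mul_apply, HyperbolicPair.slAction_apply, map_add,
    h _ (P'.embed_mem_plane _), h.symm _ (P.embed_mem_plane _), Matrix.mulVec_zero, map_zero]
  abel

theorem IsFrame.ext [Finite ι] {P : ι → HyperbolicPair B} (hP : IsFrame P) {g g' : V ≃ₗ[F] V}
    (h : ∀ l, ∀ x ∈ (P l).plane, g x = g' x) : g = g' := by
  cases nonempty_fintype ι
  ext x
  rw [← hP.sum_embed_coord x, map_sum, map_sum]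
  exact Finset.sum_congr rfl fun l _ => h l _ ((P l).embed_mem_plane _)

namespace QuaternionPlane

theorem i_mem_fixOrInvert_j (Q : QuaternionPlane B) : Q.i ∈ fixOrInvert Q.j := by
  refine .inr (eq_inv_of_mul_eq_one_left ?_)
  rw [MulAut.conj_apply, Q.i_mul_j]
  calc Q.t * (Q.j * Q.i) * Q.i⁻¹ * Q.j = Q.t * (Q.j * Q.j) := by group
    _ = 1 := by rw [Q.j_mul_j, Q.t_mul_t]

theorem j_mem_fixOrInvert_i (Q : QuaternionPlane B) : Q.j ∈ fixOrInvert Q.i := by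
  have h : Q.j * Q.i = Q.t * (Q.i * Q.j) := by
    rw [Q.i_mul_j, ← mul_assoc, Q.t_mul_t, one_mul]
  refine .inr (eq_inv_of_mul_eq_one_left ?_)
  rw [MulAut.conj_apply, h]
  calc Q.t * (Q.i * Q.j) * Q.j⁻¹ * Q.i = Q.t * (Q.i * Q.i) := by group
    _ = 1 := by rw [Q.i_mul_i, Q.t_mul_t]

end QuaternionPlane

/-- The isometries which normalize the cyclic groups generated by `i` and by `j`, for each plane of
a family of quaternion planes. -/
noncomputable def quaternionNormalizer (Q : ι → QuaternionPlane B) : Subgroup (V ≃ₗ[F] V) :=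
  formIsometries B ⊓ ⨅ l, fixOrInvert (Q l).i ⊓ fixOrInvert (Q l).j

variable {Q : ι → QuaternionPlane B}

theorem mem_quaternionNormalizer {g : V ≃ₗ[F] V} : g ∈ quaternionNormalizer Q ↔
    g ∈ formIsometries B ∧ ∀ l, g ∈ fixOrInvert (Q l).i ∧ g ∈ fixOrInvert (Q l).j := by
  simp [quaternionNormalizer, Subgroup.mem_iInf]

theorem i_mem_quaternionNormalizer (hQ : IsFrame fun l => (Q l).toHyperbolicPair) (l : ι) :
    (Q l).i ∈ quaternionNormalizer Q := by
  refine mem_quaternionNormalizer.mpr ⟨(Q l).i_mem_formIsometries, fun n => ?_⟩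
  obtain rfl | hln := eq_or_ne l n
  · exact ⟨mem_fixOrInvert_of_commute (.refl _), (Q l).i_mem_fixOrInvert_j⟩
  · exact ⟨mem_fixOrInvert_of_commute ((hQ.isOrtho hln).commute_slAction _ _),
      mem_fixOrInvert_of_commute ((hQ.isOrtho hln).commute_slAction _ _)⟩

theorem j_mem_quaternionNormalizer (hQ : IsFrame fun l => (Q l).toHyperbolicPair) (l : ι) :
    (Q l).j ∈ quaternionNormalizer Q := by
  refine mem_quaternionNormalizer.mpr ⟨(Q l).j_mem_formIsometries, fun n => ?_⟩
  obtain rfl | hln := eq_or_ne l n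
  · exact ⟨(Q l).j_mem_fixOrInvert_i, mem_fixOrInvert_of_commute (.refl _)⟩
  · exact ⟨mem_fixOrInvert_of_commute ((hQ.isOrtho hln).commute_slAction _ _),
      mem_fixOrInvert_of_commute ((hQ.isOrtho hln).commute_slAction _ _)⟩

theorem pow_four_eq_one_of_mem_quaternionNormalizer [Finite ι] [NeZero (2 : F)]
    (hQ : IsFrame fun l => (Q l).toHyperbolicPair) {g : V ≃ₗ[F] V}
    (hg : g ∈ quaternionNormalizer Q) : g ^ 4 = 1 := by
  rw [mem_quaternionNormalizer] at hg
  refine hQ.ext fun l x hx => ?_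
  have hsq : (g ^ 4) x = (g * g) ((g * g) x) := by
    rw [← LinearEquiv.mul_apply, ← pow_two, ← pow_two, ← pow_mul]
  rcases (Q l).eq_self_or_eq_neg_of_commute (mul_mem hg.1 hg.1)
    (commute_mul_self_of_mem_fixOrInvert (hg.2 l).1)
    (commute_mul_self_of_mem_fixOrInvert (hg.2 l).2) with h | h
  · rw [hsq, h x hx, h x hx]; rfl
  · rw [hsq, h x hx, map_neg, h x hx, neg_neg]; rfl

theorem isPGroup_quaternionNormalizer [Finite ι] [NeZero (2 : F)]
    (hQ : IsFrame fun l => (Q l).toHyperbolicPair) : IsPGroup 2 (quaternionNormalizer Q) :=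
  fun g => ⟨2, Subtype.ext (pow_four_eq_one_of_mem_quaternionNormalizer hQ g.2)⟩

theorem exists_isFrame_quaternionPlane [FiniteDimensional F V] [NeZero (2 : F)] (halt : B.IsAlt)
    (hnd : LinearMap.SeparatingLeft B) {a b : F} (hab : a ^ 2 + b ^ 2 = -1)
    {H : Subgroup (V ≃ₗ[F] V)} (hH : ¬ 2 ∣ H.relIndex (formSimilitudes B)) :
    ∃ (k : ℕ) (Q : Fin k → QuaternionPlane B), IsFrame (fun l => (Q l).toHyperbolicPair) ∧
      ∀ l, (Q l).i ∈ H ∧ (Q l).j ∈ H := by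
  obtain ⟨k, P, hP⟩ := exists_isFrame halt hnd
  let Q (l : Fin k) : QuaternionPlane B := ⟨P l, a, b, hab⟩
  obtain ⟨g, hg, hgH⟩ := exists_conj_mem_of_isPGroup (isPGroup_quaternionNormalizer (Q := Q) hP)
    (inf_le_left.trans formIsometries_le_formSimilitudes) hH
  refine ⟨k, fun l => (Q l).map g⁻¹ (inv_mem hg), hP.map g⁻¹ (inv_mem hg), fun l => ?_⟩
  rw [(Q l).map_i, (Q l).map_j, inv_inv]
  exact ⟨hgH _ (i_mem_quaternionNormalizer (Q := Q) hP l),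
    hgH _ (j_mem_quaternionNormalizer (Q := Q) hP l)⟩

/-- `g` maps each plane of the family into some plane of the family. -/
def PermutesPlanes (P : ι → HyperbolicPair B) (g : V ≃ₗ[F] V) : Prop :=
  ∀ n, ∃ l, ∀ x ∈ (P n).plane, g x ∈ (P l).plane

theorem permutesPlanes_of_mem [NeZero (2 : F)] (hQ : IsFrame fun l => (Q l).toHyperbolicPair)
    {H : Subgroup (V ≃ₗ[F] V)} [Group.IsSolvable H] (hHB : H ≤ formSimilitudes B)
    (hord : ∀ g ∈ H, (orderOf g : F) ≠ 0) (h3 : ∀ g ∈ H, ¬ 3 ∣ orderOf g)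
    (hi : ∀ l, (Q l).i ∈ H) (hj : ∀ l, (Q l).j ∈ H) {g : V ≃ₗ[F] V} (hg : g ∈ H) :
    PermutesPlanes (fun l => (Q l).toHyperbolicPair) g := by
  intro n
  set Q' := (Q n).map g (hHB hg)
  have hcomm (l : ι) : Commute (Q l).t Q'.t := by
    refine QuaternionPlane.commute_t_t hord h3 (hi l) (hj l) ?_ ?_
    · rw [(Q n).map_i]
      exact mul_mem (mul_mem hg (hi n)) (inv_mem hg)
    · rw [(Q n).map_j]
      exact mul_mem (mul_mem hg (hj n)) (inv_mem hg)
  have hsign (l : ι) : (∀ x ∈ Q'.plane, (Q l).t x = x) ∨ ∀ x ∈ Q'.plane, (Q l).t x = -x :=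
    Q'.eq_self_or_eq_neg_of_apply_apply (Q l).t_mem_formIsometries
      (fun _ => Q'.mem_plane_of_commute_t (hcomm l))
      fun x _ => LinearEquiv.congr_fun (Q l).t_mul_t x
  obtain ⟨l, hl⟩ : ∃ l, ∀ x ∈ Q'.plane, (Q l).t x = -x := by
    by_contra! hneg
    refine Q'.w_ne_zero (hQ.eq_zero _ fun l => (Q l).coord_eq_zero_iff_t_apply.mpr ?_)
    obtain ⟨x, hx, hxl⟩ := hneg l
    exact (hsign l).resolve_right (fun h => hxl (h x hx)) _ Q'.w_mem_plane
  refine ⟨l, fun x hx => (Q l).mem_plane_iff_t_apply.mpr (hl _ ?_)⟩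
  obtain ⟨c, rfl⟩ := (Q n).mem_plane_iff.mp hx
  exact Q'.mem_plane_iff.mpr ⟨c, (Q n).embed_map g (hHB hg) c⟩

end QuaternionFrame

section SquareZero

variable {F V ι : Type*} [Field F] [AddCommGroup V] [Module F V] {B : LinearMap.BilinForm F V}

namespace HyperbolicPair

variable (P : HyperbolicPair B)

theorem form_embed (c : Fin 2 → F) (x : V) :
    B (P.embed c) x = (c 0 * P.coord x 1 - c 1 * P.coord x 0) * B P.w P.v := by
  obtain ⟨d, y, rfl, hy⟩ := P.exists_eq_embed_add x
  rw [map_add, P.form_embed_eq_zero hy, add_zero, form_embed_embed, map_add, coord_embed, hy,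
    add_zero]

theorem exists_form_embed_eq_one {c : Fin 2 → F} (hc : c ≠ 0) :
    ∃ x ∈ P.plane, B (P.embed c) x = 1 := by
  obtain ⟨d, hd⟩ : ∃ d, B (P.embed c) (P.embed d) ≠ 0 := by
    by_contra! h
    have h0 := h ![0, 1]
    have h1 := h ![1, 0]
    simp only [form_embed_embed, mul_eq_zero, P.form_ne_zero, or_false] at h0 h1
    exact hc (by ext r; fin_cases r <;> simp_all)
  refine ⟨P.embed ((B (P.embed c) (P.embed d))⁻¹ • d), P.embed_mem_plane _, ?_⟩
  rw [map_smul, map_smul, smul_eq_mul, inv_mul_cancel₀ hd]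

theorem exists_eq_smul_of_form_embed_eq_zero {c : Fin 2 → F} (hc : c ≠ 0) {x : V}
    (hx : x ∈ P.plane) (h : B (P.embed c) x = 0) : ∃ e : F, x = e • P.embed c := by
  obtain ⟨d, rfl⟩ := P.mem_plane_iff.mp hx
  rw [form_embed_embed, mul_eq_zero, or_iff_left P.form_ne_zero] at h
  suffices ∃ e : F, d = e • c by
    obtain ⟨e, rfl⟩ := this
    exact ⟨e, map_smul _ _ _⟩
  by_cases h0 : c 0 = 0
  · have h1 : c 1 ≠ 0 := fun h1 => hc (by ext r; fin_cases r <;> assumption)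
    refine ⟨d 1 / c 1, ?_⟩
    ext r
    fin_cases r <;> simp_all
  · refine ⟨d 0 / c 0, ?_⟩
    ext r
    fin_cases r
    · simp [h0]
    · simp only [Fin.mk_one, Pi.smul_apply, smul_eq_mul]
      field_simp
      linear_combination h

end HyperbolicPair

variable {P : ι → HyperbolicPair B} {g h : V ≃ₗ[F] V}

theorem IsFrame.injective_of_mapsTo (hP : IsFrame P) {σ : ι → ι}
    (hσ : ∀ n, ∀ x ∈ (P n).plane, g x ∈ (P (σ n)).plane) : Function.Injective σ := by
  intro n r hnr
  have hplane : (P n).plane = (P r).plane := by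
    refine Submodule.map_injective_of_injective (f := (g : V →ₗ[F] V)) g.injective ?_
    rw [HyperbolicPair.map_plane_eq_of_mapsTo (hσ n), hnr,
      HyperbolicPair.map_plane_eq_of_mapsTo (hσ r)]
  by_contra hne
  have hw := hP.isOrtho hne (P n).w (hplane ▸ (P n).w_mem_plane)
  refine (P n).w_ne_zero ((P n).coord_injOn_plane (P n).w_mem_plane (zero_mem _) ?_)
  rw [hw, map_zero]

/-- Since `N` moves each plane off itself, comparing the components of `h u + N (h u)` and
`g u + g (N u)` in the image of the plane of `u` gives `h u = g u`. -/
theorem IsFrame.eq_of_apply_add [Finite ι] (hP : IsFrame P) {N : Module.End F V}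
    (hN : ∀ n, ∀ u ∈ (P n).plane, (P n).coord (N u) = 0)
    (hker : ∀ n, ∃ u ∈ (P n).plane, u ≠ 0 ∧ N u = 0) (hg : g ∈ formSimilitudes B)
    (hgP : PermutesPlanes P g) (hhP : PermutesPlanes P h)
    (hgh : ∀ u, h u + N (h u) = g (u + N u)) : h = g := by
  refine hP.ext fun n u hu => ?_
  obtain ⟨m, hm⟩ := hgP n
  obtain ⟨r, hr⟩ := hhP n
  have hcoord (x : V) (hx : x ∈ (P n).plane) : (P r).coord (h x) = (P r).coord (g (x + N x)) := by
    rw [← hgh, map_add, hN r _ (hr x hx), add_zero]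
  obtain rfl : r = m := by
    by_contra hrm
    obtain ⟨x, hx, hx0, hNx⟩ := hker n
    refine hx0 (h.map_eq_zero_iff.mp ((P r).coord_injOn_plane (hr x hx) (zero_mem _) ?_))
    rw [hcoord x hx, hNx, add_zero, hP.isOrtho hrm _ (hm x hx), map_zero]
  refine (P r).coord_injOn_plane (hr u hu) (hm u hu) ?_
  rw [hcoord u hu, map_add, map_add,
    HyperbolicPair.coord_apply_eq_zero_of_mapsTo hg hm (hN n u hu), add_zero]

variable [Fintype ι] (P) (c : ι → Fin 2 → F)

/-- The values of the form at the vectors `(P n).embed (c n)`, one in each plane. -/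
noncomputable def linePairing : V →ₗ[F] (ι → F) := LinearMap.pi fun n => B ((P n).embed (c n))

/-- The map `∑ A r n • B (ℓ n) · • ℓ r`, where `ℓ n = (P n).embed (c n)`. For mutually orthogonal
planes its square is zero, and it lies in the Lie algebra of the isometry group if `A` is
symmetric. -/
noncomputable def squareZeroMap (A : Matrix ι ι F) : Module.End F V :=
  ∑ r, (P r).embed ∘ₗ (LinearMap.proj r ∘ₗ A.mulVecLin ∘ₗ linePairing P c).smulRight (c r)

variable {P c} {A : Matrix ι ι F}

theorem squareZeroMap_apply (u : V) :
    squareZeroMap P c A u = ∑ r, (P r).embed ((A *ᵥ linePairing P c u) r • c r) := by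
  simp [squareZeroMap, LinearMap.sum_apply]

theorem form_squareZeroMap (u x : V) :
    B u (squareZeroMap P c A x) = -(linePairing P c u ⬝ᵥ A *ᵥ linePairing P c x) := by
  rw [squareZeroMap_apply, map_sum, dotProduct, ← Finset.sum_neg_distrib]
  refine Finset.sum_congr rfl fun r _ => ?_
  rw [map_smul, map_smul, smul_eq_mul, ← (P r).isAlt.neg_eq _ u, mul_neg, mul_comm]
  rfl

theorem form_squareZeroMap_comm (hA : A.IsSymm) (u x : V) :
    B u (squareZeroMap P c A x) = B x (squareZeroMap P c A u) := by
  rw [form_squareZeroMap, form_squareZeroMap, Matrix.dotProduct_mulVec, dotProduct_comm,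
    ← Matrix.mulVec_transpose, hA.eq]

section Orthogonal

variable (hP : Pairwise fun l n => (P l).IsOrtho (P n))

include hP

theorem coord_squareZeroMap (u : V) (r : ι) :
    (P r).coord (squareZeroMap P c A u) = (A *ᵥ linePairing P c u) r • c r := by
  rw [squareZeroMap_apply, coord_sum_embed hP]

theorem linePairing_squareZeroMap (u : V) : linePairing P c (squareZeroMap P c A u) = 0 := by
  ext r
  rw [linePairing, LinearMap.pi_apply, HyperbolicPair.form_embed, coord_squareZeroMap hP]
  simp only [Pi.smul_apply, smul_eq_mul, Pi.zero_apply]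
  ring

theorem exists_mem_formIsometries_apply_eq_add (halt : B.IsAlt) (hA : A.IsSymm) :
    ∃ x ∈ formIsometries B, ∀ u, x u = u + squareZeroMap P c A u := by
  set N := squareZeroMap P c A
  have hN (u : V) : N (N u) = 0 := by
    rw [squareZeroMap_apply, linePairing_squareZeroMap hP, Matrix.mulVec_zero]
    simp
  let x : V ≃ₗ[F] V := LinearEquiv.ofLinearMap (1 + N) (1 - N)
    (by ext u; simp [hN]) (by ext u; simp [hN])
  refine ⟨x, fun u y => ?_, fun _ => rfl⟩
  have hNN : B (N u) (N y) = 0 := by rw [form_squareZeroMap_comm hA, hN, map_zero]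
  change B (u + N u) (y + N y) = B u y
  rw [map_add, map_add, LinearMap.add_apply, LinearMap.add_apply, hNN,
    form_squareZeroMap_comm hA u y, ← halt.neg_eq y (N u)]
  abel

theorem coord_squareZeroMap_of_mem_plane {n : ι} {u : V} (hu : u ∈ (P n).plane) (r : ι) :
    (P r).coord (squareZeroMap P c A u) = (A r n * B ((P n).embed (c n)) u) • c r := by
  classical
  have hsingle : linePairing P c u = Pi.single n (B ((P n).embed (c n)) u) := by
    ext l
    rcases eq_or_ne l n with rfl | hln
    · rw [Pi.single_eq_same]; rfl
    · rw [Pi.single_eq_of_ne hln]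
      exact (P l).form_embed_eq_zero (hP hln u hu) _
  rw [coord_squareZeroMap hP, hsingle, Matrix.mulVec_single]
  simp

end Orthogonal

namespace IsFrame

variable (hP : IsFrame P)

include hP

theorem squareZeroMap_embed (n : ι) : squareZeroMap P c A ((P n).embed (c n)) = 0 := by
  refine hP.eq_zero _ fun r => ?_
  rw [coord_squareZeroMap_of_mem_plane hP.isOrtho ((P n).embed_mem_plane _),
    (P n).isAlt.self_eq_zero, mul_zero, zero_smul]

theorem squareZeroMap_apply_comm_of_conj (hc : ∀ n, c n ≠ 0) (hA : ∀ n, A n n = 0)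
    {x : V ≃ₗ[F] V} (hx : ∀ u, x u = u + squareZeroMap P c A u)
    (hxB : x * g * x⁻¹ ∈ formSimilitudes B) (hgP : PermutesPlanes P g)
    (hxP : PermutesPlanes P (x * g * x⁻¹)) (u : V) :
    squareZeroMap P c A (g u) = g (squareZeroMap P c A u) := by
  set N := squareZeroMap P c A
  have hconj (u : V) : g u + N (g u) = (x * g * x⁻¹) (u + N u) := by
    rw [← hx, ← hx]
    simp
  have hg : g = x * g * x⁻¹ := by
    refine hP.eq_of_apply_add (N := N) (fun n u hu => ?_) (fun n => ?_) hxB hxP hgP hconj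
    · rw [coord_squareZeroMap_of_mem_plane hP.isOrtho hu, hA, zero_mul, zero_smul]
    · exact ⟨_, (P n).embed_mem_plane (c n), (map_ne_zero_iff _ (P n).embed_injective).mpr (hc n),
        hP.squareZeroMap_embed n⟩
  have h := hconj u
  rwa [← hg, map_add, add_right_inj] at h

variable {σ : ι → ι} (hσ : ∀ n, ∀ x ∈ (P n).plane, g x ∈ (P (σ n)).plane) (hc : ∀ n, c n ≠ 0)
  (hcomm : ∀ u, squareZeroMap P c A (g u) = g (squareZeroMap P c A u))

include hσ hc hcomm

theorem exists_apply_embed_eq_smul (hA : ∀ n, ∃ r, A r n ≠ 0) (n : ι) :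
    ∃ d : F, g ((P n).embed (c n)) = d • (P (σ n)).embed (c (σ n)) := by
  have hmem := hσ n _ ((P n).embed_mem_plane (c n))
  refine (P (σ n)).exists_eq_smul_of_form_embed_eq_zero (hc _) hmem ?_
  obtain ⟨r, hr⟩ := hA (σ n)
  have h := coord_squareZeroMap_of_mem_plane (c := c) (A := A) hP.isOrtho hmem r
  rw [hcomm, hP.squareZeroMap_embed, map_zero, map_zero, eq_comm, smul_eq_zero,
    or_iff_left (hc r), mul_eq_zero] at h
  exact h.resolve_left hr

theorem apply_mul_eq_of_apply_embed {e : F} (hg : ∀ x y, B (g x) (g y) = e * B x y) {d : ι → F}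
    (hd : ∀ n, g ((P n).embed (c n)) = d n • (P (σ n)).embed (c (σ n))) (r n : ι) :
    A r n * (d n * d r) = A (σ r) (σ n) * e := by
  obtain ⟨u, hu, hun⟩ := (P n).exists_form_embed_eq_one (hc n)
  have hNu : squareZeroMap P c A u = ∑ s, A s n • (P s).embed (c s) := by
    rw [← hP.sum_embed_coord (squareZeroMap P c A u)]
    refine Finset.sum_congr rfl fun s _ => ?_
    rw [coord_squareZeroMap_of_mem_plane hP.isOrtho hu, hun, mul_one, map_smul]
  have hleft : (P (σ r)).coord (g (squareZeroMap P c A u)) = (A r n * d r) • c (σ r) := by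
    rw [hNu, map_sum, map_sum, Fintype.sum_eq_single r]
    · rw [map_smul, hd, map_smul, map_smul, HyperbolicPair.coord_embed, smul_smul]
    · intro s hs
      rw [map_smul, hd, map_smul, map_smul, hP.isOrtho _ _ (HyperbolicPair.embed_mem_plane _ _),
        smul_zero, smul_zero]
      exact (hP.injective_of_mapsTo hσ).ne hs.symm
  have hright := coord_squareZeroMap_of_mem_plane (c := c) (A := A) hP.isOrtho (hσ n u hu) (σ r)
  rw [hcomm, hleft] at hright
  have hcoeff := smul_left_injective F (hc (σ r)) hright
  have hform : d n * B ((P (σ n)).embed (c (σ n))) (g u) = e := by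
    rw [← smul_eq_mul, ← LinearMap.smul_apply, ← map_smul, ← hd, hg, hun, mul_one]
  linear_combination d n * hcoeff + A (σ r) (σ n) * hform

end IsFrame

end SquareZero

section Path

open SimpleGraph

theorem pathGraph_apply_eq_self {k : ℕ} {σ : Fin (k + 1) → Fin (k + 1)}
    (hσ : Function.Injective σ) (h0 : σ 0 = 0)
    (hadj : ∀ n r, (pathGraph (k + 1)).Adj n r → (pathGraph (k + 1)).Adj (σ n) (σ r))
    (n : Fin (k + 1)) : σ n = n := by
  induction n using WellFoundedLT.induction with
  | ind n ih =>
    obtain rfl | ⟨m, rfl⟩ := n.eq_zero_or_eq_succ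
    · exact h0
    have hm := hadj m.castSucc m.succ (pathGraph_adj.mpr (by simp))
    rw [ih _ m.castSucc_lt_succ, pathGraph_adj, Fin.val_castSucc] at hm
    rcases hm with hm | hm
    · exact Fin.ext (by rw [← hm, Fin.val_succ])
    · have hlt : σ m.succ < m.succ := by rw [Fin.lt_def, Fin.val_succ]; omega
      exact absurd (hσ (ih _ hlt)) hlt.ne

theorem pathGraph_apply_eq_apply_zero {F : Type*} [Field F] {k : ℕ} {d : Fin (k + 1) → F}
    (hd : d 0 ≠ 0) (hadj : ∀ n r, (pathGraph (k + 1)).Adj n r → d n * d r = d 0 * d 0)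
    (n : Fin (k + 1)) : d n = d 0 := by
  induction n using Fin.induction with
  | zero => rfl
  | succ n ih =>
    have h := hadj n.castSucc n.succ (pathGraph_adj.mpr (by simp))
    rw [ih] at h
    exact mul_left_cancel₀ hd h

/-- The adjacency matrix of the path with `k` vertices. -/
noncomputable def pathMatrix (F : Type*) [Field F] (k : ℕ) : Matrix (Fin k) (Fin k) F :=
  open Classical in (pathGraph k).adjMatrix F

theorem isSymm_pathMatrix (F : Type*) [Field F] (k : ℕ) : (pathMatrix F k).IsSymm :=
  open Classical in isSymm_adjMatrix _

theorem pathMatrix_self (F : Type*) [Field F] {k : ℕ} (n : Fin k) : pathMatrix F k n n = 0 := by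
  simp [pathMatrix]

theorem exists_pathMatrix_ne_zero (F : Type*) [Field F] {k : ℕ} (n : Fin (k + 2)) :
    ∃ r, pathMatrix F (k + 2) r n ≠ 0 := by
  obtain ⟨r, hr⟩ : ∃ r, (pathGraph (k + 2)).Adj r n := by
    obtain rfl | ⟨m, rfl⟩ := n.eq_zero_or_eq_succ
    · exact ⟨1, pathGraph_adj.mpr (by simp)⟩
    · exact ⟨m.castSucc, pathGraph_adj.mpr (by simp)⟩
  exact ⟨r, by simp [pathMatrix, hr]⟩

/-- Three choices of a line in each plane of a frame. The third one differs from the first one in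
the initial plane only, thus marking the initial vertex of the path. -/
def pathLine (F : Type*) [Field F] (k : ℕ) : Fin 3 → Fin (k + 1) → Fin 2 → F :=
  ![fun _ => ![1, 0], fun _ => ![0, 1], Fin.cons ![1, 1] fun _ => ![1, 0]]

theorem pathLine_ne_zero {F : Type*} [Field F] {k : ℕ} (s : Fin 3) (n : Fin (k + 1)) :
    pathLine F k s n ≠ 0 := by
  fin_cases s <;> cases n using Fin.cases <;> simp [pathLine]

variable {F V : Type*} [Field F] [AddCommGroup V] [Module F V] {B : LinearMap.BilinForm F V}
  {k : ℕ} {P : Fin (k + 2) → HyperbolicPair B} {g : V ≃ₗ[F] V}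

namespace IsFrame

variable (hP : IsFrame P) {e : F} (hg : ∀ x y, B (g x) (g y) = e * B x y)

include hP hg

theorem exists_apply_embed_of_pathMatrix {σ : Fin (k + 2) → Fin (k + 2)}
    (hσ : ∀ n, ∀ x ∈ (P n).plane, g x ∈ (P (σ n)).plane) {c : Fin (k + 2) → Fin 2 → F}
    (hc : ∀ n, c n ≠ 0)
    (hcomm : ∀ u, squareZeroMap P c (pathMatrix F _) (g u) =
      g (squareZeroMap P c (pathMatrix F _) u)) :
    ∃ d : Fin (k + 2) → F,
      (∀ n, d n ≠ 0 ∧ g ((P n).embed (c n)) = d n • (P (σ n)).embed (c (σ n))) ∧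
      ∀ n r, (pathGraph (k + 2)).Adj n r →
        (pathGraph (k + 2)).Adj (σ n) (σ r) ∧ d n * d r = e := by
  choose d hd using hP.exists_apply_embed_eq_smul hσ hc hcomm (exists_pathMatrix_ne_zero F)
  have hd0 (n : Fin (k + 2)) : d n ≠ 0 := by
    intro h
    have hn := hd n
    rw [h, zero_smul, map_eq_zero_iff _ g.injective, map_eq_zero_iff _ (P n).embed_injective] at hn
    exact hc n hn
  refine ⟨d, fun n => ⟨hd0 n, hd n⟩, fun n r hnr => ?_⟩
  have h := hP.apply_mul_eq_of_apply_embed hσ hc hcomm hg hd n r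
  by_cases hadj : (pathGraph (k + 2)).Adj (σ n) (σ r)
  · refine ⟨hadj, ?_⟩
    simpa [pathMatrix, hnr, hadj, mul_comm] using h
  · simp [pathMatrix, hnr, hadj, hd0] at h

theorem exists_eq_smul_of_comm_pathMatrix (hgP : PermutesPlanes P g)
    (hcomm : ∀ s u, squareZeroMap P (pathLine F _ s) (pathMatrix F _) (g u) =
      g (squareZeroMap P (pathLine F _ s) (pathMatrix F _) u)) : ∃ d : F, ∀ u, g u = d • u := by
  choose σ hσ using hgP
  have hline (s : Fin 3) := hP.exists_apply_embed_of_pathMatrix hg hσ (pathLine_ne_zero s) (hcomm s)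
  obtain ⟨d, hd, hdadj⟩ := hline 0
  obtain ⟨a, ha, haadj⟩ := hline 1
  obtain ⟨b, hb, -⟩ := hline 2
  have hw (n : Fin (k + 2)) : g (P n).w = d n • (P (σ n)).w := by
    simpa [pathLine, HyperbolicPair.embed_apply] using (hd n).2
  have hv (n : Fin (k + 2)) : g (P n).v = a n • (P (σ n)).v := by
    simpa [pathLine, HyperbolicPair.embed_apply] using (ha n).2
  obtain ⟨hσ0, had⟩ : σ 0 = 0 ∧ a 0 = d 0 := by
    have hwv : (P (σ 0)).embed ![d 0, a 0] = (P (σ 0)).embed (b 0 • pathLine F _ 2 (σ 0)) := by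
      rw [map_smul, ← (hb 0).2]
      simp [pathLine, HyperbolicPair.embed_apply, hw, hv]
    have hcoord := congrFun ((P (σ 0)).embed_injective hwv)
    obtain hσ0 | ⟨m, hm⟩ := (σ 0).eq_zero_or_eq_succ
    · have h0 : d 0 = b 0 := by simpa [pathLine, hσ0] using hcoord 0
      have h1 : a 0 = b 0 := by simpa [pathLine, hσ0] using hcoord 1
      exact ⟨hσ0, h1.trans h0.symm⟩
    · exact absurd (by simpa [pathLine, hm] using hcoord 1) (ha 0).1
  have hde : d 0 * d 0 = e := by
    have h := hg (P 0).w (P 0).v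
    rw [hw, hv, hσ0, had, map_smul, map_smul, LinearMap.smul_apply, smul_smul, smul_eq_mul] at h
    exact mul_right_cancel₀ (P 0).form_ne_zero h
  have hid := pathGraph_apply_eq_self (hP.injective_of_mapsTo hσ) hσ0 fun n r h => (hdadj n r h).1
  have hdn := pathGraph_apply_eq_apply_zero (hd 0).1 fun n r h => (hdadj n r h).2.trans hde.symm
  have han := pathGraph_apply_eq_apply_zero (ha 0).1 fun n r h =>
    (haadj n r h).2.trans (by rw [had, hde])
  refine ⟨d 0, fun u => ?_⟩
  rw [← hP.sum_embed_coord u, map_sum, Finset.smul_sum]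
  refine Finset.sum_congr rfl fun n _ => ?_
  rw [HyperbolicPair.embed_apply, map_add, map_smul, map_smul, hw, hv, hid, hdn, han, had,
    smul_add, smul_comm (d 0), smul_comm (d 0)]

end IsFrame

end Path

theorem mem_conjBy {G : Type*} [Group G] {H : Subgroup G} {x g : G} :
    g ∈ conjBy H x ↔ x * g * x⁻¹ ∈ H := by
  rw [conjBy, Subgroup.mem_map_equiv]
  simp

theorem map_mem_conjBy_map {G G' : Type*} [Group G] [Group G'] {e : G ≃* G'} {H : Subgroup G}
    {x g : G} : e g ∈ conjBy (H.map e.toMonoidHom) (e x) ↔ g ∈ conjBy H x := by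
  rw [mem_conjBy, mem_conjBy, Subgroup.mem_map_equiv]
  simp

section Conjugates

variable {F V : Type*} [Field F] [AddCommGroup V] [Module F V] {B : LinearMap.BilinForm F V}

theorem exists_conjBy_inf_scalar [FiniteDimensional F V] [NeZero (2 : F)] (halt : B.IsAlt)
    (hnd : LinearMap.SeparatingLeft B) (hdim : 4 ≤ Module.finrank F V) {a b : F}
    (hab : a ^ 2 + b ^ 2 = -1) {H : Subgroup (V ≃ₗ[F] V)} [Group.IsSolvable H]
    (hHB : H ≤ formSimilitudes B) (hidx : ¬ 2 ∣ H.relIndex (formSimilitudes B))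
    (hord : ∀ g ∈ H, (orderOf g : F) ≠ 0) (h3 : ∀ g ∈ H, ¬ 3 ∣ orderOf g) :
    ∃ x ∈ formIsometries B, ∃ y ∈ formIsometries B, ∃ z ∈ formIsometries B,
      ∀ g ∈ H ⊓ conjBy H x ⊓ conjBy H y ⊓ conjBy H z, ∃ c : F, ∀ u, g u = c • u := by
  obtain ⟨k, Q, hQ, hQH⟩ := exists_isFrame_quaternionPlane halt hnd hab hidx
  obtain ⟨k, rfl⟩ : ∃ k', k = k' + 2 := by
    have hk := hQ.finrank_le
    rw [Fintype.card_fin] at hk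
    exact ⟨k - 2, by omega⟩
  set P := fun l => (Q l).toHyperbolicPair
  have hperm {g : V ≃ₗ[F] V} (hg : g ∈ H) : PermutesPlanes P g :=
    permutesPlanes_of_mem hQ hHB hord h3 (fun l => (hQH l).1) (fun l => (hQH l).2) hg
  choose x hxB hx using fun s => exists_mem_formIsometries_apply_eq_add (c := pathLine F _ s)
    hQ.isOrtho halt (isSymm_pathMatrix F (k + 2))
  refine ⟨x 0, hxB 0, x 1, hxB 1, x 2, hxB 2, ?_⟩
  rintro g ⟨⟨⟨hg, h0⟩, h1⟩, h2⟩
  have hconj (s : Fin 3) : x s * g * (x s)⁻¹ ∈ H := by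
    fin_cases s
    exacts [mem_conjBy.mp h0, mem_conjBy.mp h1, mem_conjBy.mp h2]
  obtain ⟨e, -, he⟩ := hHB hg
  exact hQ.exists_eq_smul_of_comm_pathMatrix he (hperm hg) fun s =>
    hQ.squareZeroMap_apply_comm_of_conj (pathLine_ne_zero s) (pathMatrix_self F) (hx s)
      (hHB (hconj s)) (hperm hg) (hperm (hconj s))

end Conjugates

section RowAction

variable {n : ℕ} {F : Type*} [Field F]

/-- The left action of the general linear group on row vectors, `g` sending `u` to `u g⁻¹`. -/
noncomputable def rowAction : GL (Fin n) F ≃* ((Fin n → F) ≃ₗ[F] (Fin n → F)) :=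
  (Units.mapEquiv (Matrix.transposeRingEquiv (Fin n) F).toMulEquiv).trans Units.opEquiv |>.trans
    (MulEquiv.inv' _).symm |>.trans Matrix.GeneralLinearGroup.toLin |>.trans
    (LinearMap.GeneralLinearGroup.generalLinearEquiv F _)

theorem rowAction_apply (g : GL (Fin n) F) (u : Fin n → F) :
    rowAction g u = u ᵥ* ((g⁻¹ : GL (Fin n) F) : Matrix (Fin n) (Fin n) F) := by
  rw [← Matrix.mulVec_transpose]
  rfl

theorem eq_smul_one_of_rowAction_inv {g : GL (Fin n) F} {c : F}
    (h : ∀ u, rowAction g⁻¹ u = c • u) :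
    (g : Matrix (Fin n) (Fin n) F) = c • (1 : Matrix (Fin n) (Fin n) F) := by
  refine Matrix.ext_of_single_vecMul fun l => ?_
  rw [← inv_inv g, ← rowAction_apply, h, Matrix.vecMul_smul, Matrix.vecMul_one]

variable {B : LinearMap.BilinForm F (Fin n → F)}

theorem rowAction_mem_formIsometries {g : GL (Fin n) F} :
    rowAction g ∈ formIsometries B ↔ g ∈ isometryGroup (fun u v => B u v) := by
  rw [← inv_mem_iff (x := g)]
  exact forall₂_congr fun u v => by rw [rowAction_apply, rowAction_apply]

theorem map_similitudeGroup_rowAction :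
    (similitudeGroup (fun u v => B u v)).map rowAction.toMonoidHom = formSimilitudes B := by
  ext f
  obtain ⟨g, rfl⟩ := rowAction.surjective f
  rw [Subgroup.mem_map_equiv, MulEquiv.symm_apply_apply, ← inv_mem_iff]
  have hform (u v : Fin n → F) : B (rowAction g u) (rowAction g v) =
      B (u ᵥ* ((g⁻¹ : GL (Fin n) F) : Matrix _ _ F))
        (v ᵥ* ((g⁻¹ : GL (Fin n) F) : Matrix _ _ F)) := by
    rw [rowAction_apply, rowAction_apply]
  constructor
  · rintro ⟨c, hc⟩
    exact ⟨c, c.ne_zero, fun u v => (hform u v).trans (hc u v)⟩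
  · rintro ⟨c, hc, h⟩
    exact ⟨Units.mk0 c hc, fun u v => (hform u v).symm.trans (h u v)⟩

end RowAction

end SymplecticHall

open SymplecticHall in
theorem stmt7_general {n p : ℕ} {F : Type*} [Field F] [NeZero p] [CharP F p] (hn : 4 ≤ n)
    {B : LinearMap.BilinForm F (Fin n → F)} (halt : B.IsAlt) (hnd : LinearMap.SeparatingLeft B)
    {H : Subgroup (GL (Fin n) F)} [Group.IsSolvable H]
    (hHB : H ≤ similitudeGroup (fun u v => B u v))
    (hidx : ¬ 2 ∣ H.relIndex (similitudeGroup (fun u v => B u v))) (hp2 : p ≠ 2)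
    (h3 : ¬ 3 ∣ Nat.card H) (hpH : ¬ p ∣ Nat.card H) :
    ∃ x ∈ isometryGroup (fun u v => B u v), ∃ y ∈ isometryGroup (fun u v => B u v),
      ∃ z ∈ isometryGroup (fun u v => B u v), ∀ g ∈ H ⊓ conjBy H x ⊓ conjBy H y ⊓ conjBy H z,
        ∃ c : F, (g : Matrix (Fin n) (Fin n) F) = c • (1 : Matrix (Fin n) (Fin n) F) := by
  have : NeZero (2 : F) := ⟨Ring.two_ne_zero (ringChar.eq F p ▸ hp2)⟩
  obtain ⟨a, b, hab⟩ := CharP.sq_add_sq F p (-1)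
  have hord {r : ℕ} (hr : ¬ r ∣ Nat.card H) :
      ∀ g ∈ H.map rowAction.toMonoidHom, ¬ r ∣ orderOf g := by
    rintro _ ⟨g, hg, rfl⟩ h
    exact hr (h.trans ((orderOf_map_dvd _ g).trans (H.orderOf_dvd_natCard hg)))
  have : Group.IsSolvable (H.map rowAction.toMonoidHom) :=
    Group.isSolvable_of_surjective (rowAction.toMonoidHom.subgroupMap_surjective H)
  obtain ⟨x, hx, y, hy, z, hz, hxyz⟩ := exists_conjBy_inf_scalar (H := H.map rowAction.toMonoidHom)
    halt hnd (by rwa [Module.finrank_fin_fun]) (a := a) (b := b) (by exact_mod_cast hab)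
    (map_similitudeGroup_rowAction (B := B) ▸ Subgroup.map_mono hHB)
    (by rwa [← map_similitudeGroup_rowAction,
      Subgroup.relIndex_map_map_of_injective _ _ rowAction.injective])
    (fun g hg => by rw [Ne, CharP.cast_eq_zero_iff F p]; exact hord hpH g hg) (hord h3)
  obtain ⟨x, rfl⟩ := rowAction.surjective x
  obtain ⟨y, rfl⟩ := rowAction.surjective y
  obtain ⟨z, rfl⟩ := rowAction.surjective z
  rw [rowAction_mem_formIsometries] at hx hy hz
  refine ⟨x, hx, y, hy, z, hz, fun g hg => ?_⟩
  obtain ⟨⟨⟨hgH, hgx⟩, hgy⟩, hgz⟩ := inv_mem hg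
  obtain ⟨c, hc⟩ := hxyz (rowAction g⁻¹) ⟨⟨⟨Subgroup.mem_map_of_mem _ hgH,
    map_mem_conjBy_map.mpr hgx⟩, map_mem_conjBy_map.mpr hgy⟩, map_mem_conjBy_map.mpr hgz⟩
  exact ⟨c, eq_smul_one_of_rowAction_inv hc⟩

theorem stmt7 (p f q m : ℕ) (hp : p.Prime) (hf : 1 ≤ f) (hq : q = p ^ f)
    (F : Type) [Field F] [Fintype F] (hcard : Fintype.card F = q)
    (hm : 4 ≤ 2 * m)
    (B : LinearMap.BilinForm F (Fin (2 * m) → F))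
    (halt : ∀ v : Fin (2 * m) → F, B v v = 0) (hnd : ∀ u : Fin (2 * m) → F, (∀ v : Fin (2 * m) → F, B u v = 0) → u = 0)
    (hnonsolv : ¬ IsSolvable ↥(similitudeGroup (fun u v => B u v)))
    (π : Set ℕ) (hπ : ∀ r ∈ π, r.Prime) (h2pi : 2 ∈ π) (h3pi : 3 ∉ π) (hppi : p ∉ π)
    (H : Subgroup (GL (Fin (2 * m)) F))
    (hH : IsHallSubgroupIn π (similitudeGroup (fun u v => B u v)) H)
    (hsolv : IsSolvable ↥H)
    :
    ∃ x y z : GL (Fin (2 * m)) F,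
      x ∈ (H : Set (GL (Fin (2 * m)) F)) * (isometryGroup (fun u v => B u v) : Set (GL (Fin (2 * m)) F)) ∧
      y ∈ (H : Set (GL (Fin (2 * m)) F)) * (isometryGroup (fun u v => B u v) : Set (GL (Fin (2 * m)) F)) ∧
      z ∈ (H : Set (GL (Fin (2 * m)) F)) * (isometryGroup (fun u v => B u v) : Set (GL (Fin (2 * m)) F)) ∧
    ∀ g ∈ H ⊓ conjBy H x ⊓ conjBy H y ⊓ conjBy H z,
      ∃ c : F, (g : Matrix (Fin (2 * m)) (Fin (2 * m)) F) = c • (1 : Matrix (Fin (2 * m)) (Fin (2 * m)) F) := by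
  have : NeZero p := ⟨hp.ne_zero⟩
  have : Fact p.Prime := ⟨hp⟩
  have : CharP F p := charP_of_card_eq_prime_pow (hcard.trans hq)
  have : Group.IsSolvable H := hsolv
  obtain ⟨hHB, hcardH, hidx⟩ := hH
  obtain ⟨x, hx, y, hy, z, hz, hxyz⟩ := stmt7_general (p := p) hm halt hnd hHB (hidx 2 h2pi)
    (fun h => hppi (h ▸ h2pi)) (fun h => h3pi (hcardH 3 Nat.prime_three h))
    (fun h => hppi (hcardH p hp h))
  exact ⟨x, y, z, Set.subset_mul_right _ H.one_mem hx, Set.subset_mul_right _ H.one_mem hy,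
    Set.subset_mul_right _ H.one_mem hz, hxyz⟩
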